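/- For all integers k ≥ 3 and r ≥ 2 it holds that h_r(k) = max{f(k), g_r(k)}. -/

import Mathlib

open Finset

def HyperUniform {V : Type*} (k : ℕ) (H : Finset (Finset V)) : Prop := ∀ e ∈ H, e.card = k

def IsPM {V : Type*} [Fintype V] (H M : Finset (Finset V)) : Prop :=
  M ⊆ H ∧ (∀ e ∈ M, ∀ f ∈ M, e ≠ f → Disjoint e f) ∧ ∀ v : V, ∃ e ∈ M, v ∈ e

def hdeg {V : Type*} [DecidableEq V] (H : Finset (Finset V)) (v : V) : ℕ :=
  (H.filter (fun e => v ∈ e)).card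

def IsVec (k r : ℕ) (a : ℕ → ℕ) : Prop :=
  (∀ i j : ℕ, i ≤ j → j < r → a i ≤ a j) ∧ (∑ i ∈ Finset.range r, a i) = k - 1

noncomputable def gfun (k r : ℕ) (a : ℕ → ℕ) : ℝ :=
  (((k - 1).factorial : ℝ) / (∏ i ∈ Finset.range r, ((a i).factorial : ℝ))) *
    (∏ i ∈ Finset.range r, (((r * a i + 1 : ℕ) : ℝ) / ((r * k : ℕ) : ℝ)) ^ (a i)) *
    (1 + ((a 0 : ℝ) / ((r * a 0 + 1 : ℕ) : ℝ)) *
      ∑ i ∈ Finset.Ico 1 r, ((r * a i + 1 : ℕ) : ℝ) / ((a i + 1 : ℕ) : ℝ))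

noncomputable def gThr (k r : ℕ) : ℝ :=
  sSup {x : ℝ | ∃ a : ℕ → ℕ, IsVec k r a ∧ x = gfun k r a}

noncomputable def mThr (k n : ℕ) : ℕ :=
  sInf {m : ℕ | ∀ H : Finset (Finset (Fin n)), HyperUniform k H →
    (∀ v : Fin n, m ≤ hdeg H v) → ∃ M, IsPM H M}

noncomputable def fThr (k : ℕ) : ℝ :=
  Filter.limsup (fun n : ℕ => (mThr k n : ℝ) / ((n - 1).choose (k - 1) : ℝ))
    (Filter.atTop ⊓ Filter.principal {n : ℕ | k ∣ n})

def DiscProp (k r : ℕ) (h : ℝ) : Prop :=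
  ∀ ε : ℝ, 0 < ε → ∃ δ : ℝ, 0 < δ ∧ ∃ n₀ : ℕ, ∀ n : ℕ, n₀ ≤ n → k ∣ n →
    ∀ H : Finset (Finset (Fin n)), HyperUniform k H →
      (∀ v : Fin n, (h + ε) * (((n - 1).choose (k - 1) : ℕ) : ℝ) ≤ (hdeg H v : ℝ)) →
      ∀ c : Finset (Fin n) → Fin r,
        ∃ M, IsPM H M ∧ ∃ i : Fin r,
          (n : ℝ) / ((r : ℝ) * (k : ℝ)) + δ * (n : ℝ) ≤
            ((M.filter (fun e => c e = i)).card : ℝ)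

noncomputable def hThr (k r : ℕ) : ℝ :=
  sInf {h : ℝ | 0 < h ∧ DiscProp k r h}

/-!
Ignoring the colours shows `f(k) ≤ h_r(k)`. For `g_r(k) ≤ h_r(k)`, fix `a` with entries summing to
`k - 1` and split the vertices into `r` parts, the part `i` of size about `(r a_i + 1) n / (r k)`.
The hypergraph of all `k`-sets with index vector `a + 1_i` for some `i`, each coloured by its `i`,
has minimum degree density `g_r(a)`, but counting vertices part by part shows that every perfect
matching uses all colours equally often.

For the upper bound, consider gadgets: pairs of perfect matchings of the same small vertex set in
which some colour occurs a different number of times. If there are many disjoint gadgets, join them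
to two perfect matchings that differ by a linear number of edges in one colour; as the degree
exceeds `f(k)`, both extend by the same edges to perfect matchings of the hypergraph, and one of
them favours some colour. Otherwise deleting few vertices destroys all gadgets, so that the numbers
of edges of each colour in a small matching depend only on its vertex set. Any two vertices have a
common link, since `f(k) ≥ 1/2`, and exchanging vertices through common links yields a partition of
the vertices, a sign `σ` and a vector `a` such that every edge of colour `i` has index vector
`a + σ 1_i`. If no perfect matching favours a colour, the part `i` has size about
`(r a_i + σ) n / (r k)`, and then some vertex has degree density at most about `max {f(k), g_r(k)}`:
for `σ = 1` this is the construction above; for `σ = -1`, either some `a_i = 1` and the links of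
the vertices of part `i` avoid that part, or `r = 2` and swapping the parts reverses the sign, or
the links of vertices from three parts overlap too little for all three to be larger than `f(k)`.
-/

section IndexVector

variable {V ι : Type*} [DecidableEq ι]

/-- The index vector of `T` with respect to the partition of the vertices into the fibres of `p`:
its entry at `i` is the number of vertices of `T` in the `i`-th part. -/
def indexVector (p : V → ι) (T : Finset V) (i : ι) : ℕ := #{x ∈ T | p x = i}

lemma indexVector_mono (p : V → ι) {S T : Finset V} (h : S ⊆ T) :
    indexVector p S ≤ indexVector p T :=
  fun _ => card_le_card (filter_subset_filter _ h)

lemma exists_mem_of_indexVector_pos {p : V → ι} {T : Finset V} {i : ι}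
    (h : 0 < indexVector p T i) : ∃ v ∈ T, p v = i := by
  obtain ⟨v, hv⟩ := card_pos.1 h
  exact ⟨v, mem_filter.1 hv⟩

lemma sum_indexVector [Fintype ι] (p : V → ι) (T : Finset V) : ∑ i, indexVector p T i = #T :=
  (card_eq_sum_card_fiberwise fun x _ => mem_univ (p x)).symm

lemma indexVector_insert [DecidableEq V] (p : V → ι) {T : Finset V} {v : V} (hv : v ∉ T) :
    indexVector p (insert v T) = indexVector p T + Pi.single (p v) 1 := by
  funext i
  by_cases h : p v = i
  · subst h
    simp [indexVector, filter_insert, hv]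
  · simp [indexVector, filter_insert, h, Ne.symm h]

lemma indexVector_biUnion [DecidableEq V] (p : V → ι) {M : Finset (Finset V)}
    (hM : (M : Set (Finset V)).PairwiseDisjoint id) (i : ι) :
    indexVector p (M.biUnion id) i = ∑ e ∈ M, indexVector p e i := by
  unfold indexVector
  rw [filter_biUnion, card_biUnion fun e he f hf hef => disjoint_filter_filter (hM he hf hef)]
  rfl

lemma card_filter_indexVector_eq [Fintype ι] (p : V → ι) (U : Finset V) (s : ι → ℕ) :
    #{T ∈ U.powerset | indexVector p T = s} = ∏ i, (indexVector p U i).choose (s i) := by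
  classical
  have filter_biUnion_eq (F : ι → Finset V) (hF : ∀ i, F i ⊆ {x ∈ U | p x = i}) (i : ι) :
      {x ∈ univ.biUnion F | p x = i} = F i := by
    ext x
    simp only [mem_filter, mem_biUnion, mem_univ, true_and]
    refine ⟨?_, fun hx => ⟨⟨i, hx⟩, (mem_filter.1 (hF i hx)).2⟩⟩
    rintro ⟨⟨i', hx⟩, rfl⟩
    rwa [(mem_filter.1 (hF i' hx)).2]
  calc #{T ∈ U.powerset | indexVector p T = s}
      = #(Fintype.piFinset fun i => {x ∈ U | p x = i}.powersetCard (s i)) := by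
        refine card_nbij' (fun T i => {x ∈ T | p x = i}) (fun F => univ.biUnion F) ?_ ?_ ?_ ?_
        · intro T hT
          simp only [coe_filter, mem_powerset, Set.mem_ofPred_eq] at hT
          simp only [mem_coe, Fintype.mem_piFinset, mem_powersetCard]
          exact fun i => ⟨filter_subset_filter _ hT.1, congrFun hT.2 i⟩
        · intro F hF
          simp only [mem_coe, Fintype.mem_piFinset, mem_powersetCard] at hF
          simp only [coe_filter, mem_powerset, Set.mem_ofPred_eq, biUnion_subset]
          refine ⟨fun i _ => (hF i).1.trans (filter_subset _ _), funext fun i => ?_⟩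
          rw [indexVector, filter_biUnion_eq F (fun i => (hF i).1), (hF i).2]
        · intro T _
          ext x
          simp
        · intro F hF
          simp only [mem_coe, Fintype.mem_piFinset, mem_powersetCard] at hF
          exact funext (filter_biUnion_eq F fun i => (hF i).1)
    _ = ∏ i, (indexVector p U i).choose (s i) := by
        simp only [Fintype.card_piFinset, card_powersetCard, indexVector]

lemma exists_indexVector_univ_eq [Fintype V] [Fintype ι] (s : ι → ℕ)
    (hs : ∑ i, s i = Fintype.card V) : ∃ p : V → ι, indexVector p univ = s := by
  obtain ⟨E⟩ : Nonempty (V ≃ Σ i, Fin (s i)) := ⟨Fintype.equivOfCardEq (by simp [hs])⟩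
  refine ⟨fun x => (E x).1, funext fun i => ?_⟩
  calc #{x | (E x).1 = i} = Fintype.card {x // (E x).1 = i} := (Fintype.card_subtype _).symm
    _ = Fintype.card (Fin (s i)) :=
        Fintype.card_congr ((E.subtypeEquiv fun _ => Iff.rfl).trans (Equiv.sigmaSubtype i))
    _ = s i := Fintype.card_fin _

end IndexVector

section Link

variable {V : Type*} [DecidableEq V] {k : ℕ} {H : Finset (Finset V)} {v : V} {T : Finset V}

/-- The link `N_H(v)` of the vertex `v`: all sets `T` with `v ∉ T` and `T ∪ {v} ∈ H`. -/
def link (H : Finset (Finset V)) (v : V) : Finset (Finset V) :=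
  {e ∈ H | v ∈ e}.image fun e => e.erase v

lemma mem_link : T ∈ link H v ↔ v ∉ T ∧ insert v T ∈ H := by
  simp only [link, mem_image, mem_filter]
  constructor
  · rintro ⟨e, ⟨he, hv⟩, rfl⟩
    exact ⟨notMem_erase v e, by rwa [insert_erase hv]⟩
  · rintro ⟨hv, h⟩
    exact ⟨insert v T, ⟨h, mem_insert_self v T⟩, erase_insert hv⟩

lemma card_link (H : Finset (Finset V)) (v : V) : #(link H v) = hdeg H v := by
  refine card_image_of_injOn fun e he f hf h => ?_
  simp only [coe_filter, Set.mem_ofPred_eq] at he hf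
  calc e = insert v (e.erase v) := (insert_erase he.2).symm
    _ = insert v (f.erase v) := congrArg (insert v) h
    _ = f := insert_erase hf.2

lemma card_of_mem_link (hH : HyperUniform k H) (hT : T ∈ link H v) : #T = k - 1 := by
  have hcard := hH _ (mem_link.1 hT).2
  rw [card_insert_of_notMem (mem_link.1 hT).1] at hcard
  omega

variable [Fintype V]

lemma link_subset_powersetCard (hH : HyperUniform k H) :
    link H v ⊆ (univ.erase v).powersetCard (k - 1) := fun _ hT =>
  mem_powersetCard.2 ⟨subset_erase.2 ⟨subset_univ _, (mem_link.1 hT).1⟩, card_of_mem_link hH hT⟩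

lemma hdeg_le_choose (hH : HyperUniform k H) (v : V) :
    hdeg H v ≤ (Fintype.card V - 1).choose (k - 1) := by
  have h := card_le_card (link_subset_powersetCard (v := v) hH)
  rwa [card_link, card_powersetCard, card_erase_of_mem (mem_univ v), card_univ] at h

lemma hdeg_le_card_filter_disjoint_add (hH : HyperUniform k H) (v : V) (Y : Finset V) :
    hdeg H v ≤ #{T ∈ link H v | Disjoint T Y} + #Y * (Fintype.card V - 1).choose (k - 2) := by
  rw [← card_link, ← card_filter_add_card_filter_not (s := link H v) (Disjoint · Y)]
  gcongr
  have hsub : {T ∈ link H v | ¬Disjoint T Y} ⊆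
      Y.biUnion fun y => ((univ.erase y).powersetCard (k - 2)).image (insert y) := by
    intro T hT
    obtain ⟨hT, y, hyT, hyY⟩ : T ∈ link H v ∧ ∃ y ∈ T, y ∈ Y := by
      rwa [mem_filter, not_disjoint_iff] at hT
    simp only [mem_biUnion, mem_image, mem_powersetCard]
    refine ⟨y, hyY, T.erase y, ⟨erase_subset_erase _ (subset_univ _), ?_⟩, insert_erase hyT⟩
    rw [card_erase_of_mem hyT, card_of_mem_link hH hT, Nat.sub_sub]
  refine (card_le_card hsub).trans (card_biUnion_le_card_mul _ _ _ fun y _ => ?_)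
  refine card_image_le.trans_eq ?_
  rw [card_powersetCard, card_erase_of_mem (mem_univ y), card_univ]

end Link

section PerfectMatchingOn

variable {V : Type*} [DecidableEq V]

/-- `M` is a perfect matching of the subhypergraph of `H` induced on the vertex set `U`. -/
structure IsPerfectMatchingOn (H M : Finset (Finset V)) (U : Finset V) : Prop where
  subset : M ⊆ H
  pairwiseDisjoint : (M : Set (Finset V)).PairwiseDisjoint id
  biUnion_eq : M.biUnion id = U

lemma isPM_iff_isPerfectMatchingOn_univ [Fintype V] {H M : Finset (Finset V)} :
    IsPM H M ↔ IsPerfectMatchingOn H M univ := by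
  constructor
  · rintro ⟨hMH, hdisj, hcover⟩
    exact ⟨hMH, fun e he f hf => hdisj e he f hf, by ext v; simpa using hcover v⟩
  · rintro ⟨hMH, hdisj, hcover⟩
    exact ⟨hMH, fun e he f hf => hdisj he hf, fun v => by simpa [← hcover] using mem_univ v⟩

namespace IsPerfectMatchingOn

variable {H M N : Finset (Finset V)} {U W : Finset V}

lemma mono {H' : Finset (Finset V)} (h : IsPerfectMatchingOn H M U) (hH : H ⊆ H') :
    IsPerfectMatchingOn H' M U :=
  ⟨h.subset.trans hH, h.pairwiseDisjoint, h.biUnion_eq⟩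

lemma vertices_subset (h : IsPerfectMatchingOn H M W) (hHU : ∀ e ∈ H, e ⊆ U) : W ⊆ U :=
  h.biUnion_eq ▸ biUnion_subset.2 fun e he => hHU e (h.subset he)

lemma edge_subset (h : IsPerfectMatchingOn H M U) {e : Finset V} (he : e ∈ M) : e ⊆ U :=
  h.biUnion_eq ▸ subset_biUnion_of_mem id he

lemma filter (h : IsPerfectMatchingOn H M U) (P : Finset V → Prop) [DecidablePred P] :
    IsPerfectMatchingOn {e ∈ H | P e} {e ∈ M | P e} ({e ∈ M | P e}.biUnion id) where
  subset := filter_subset_filter _ h.subset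
  pairwiseDisjoint := h.pairwiseDisjoint.subset (coe_subset.2 (filter_subset _ _))
  biUnion_eq := rfl

lemma card_eq {k : ℕ} (h : IsPerfectMatchingOn H M U) (hH : HyperUniform k H) : #U = #M * k := by
  rw [← h.biUnion_eq, card_biUnion h.pairwiseDisjoint]
  exact sum_const_nat fun e he => hH e (h.subset he)

lemma indexVector_eq {ι : Type*} [DecidableEq ι] (h : IsPerfectMatchingOn H M U) (p : V → ι)
    (i : ι) : indexVector p U i = ∑ e ∈ M, indexVector p e i := by
  rw [← h.biUnion_eq, indexVector_biUnion p h.pairwiseDisjoint]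

lemma disjoint {k : ℕ} (hk : 1 ≤ k) (hH : HyperUniform k H) (hM : IsPerfectMatchingOn H M U)
    (hN : IsPerfectMatchingOn H N W) (hUW : Disjoint U W) : Disjoint M N := by
  refine disjoint_left.2 fun e heM heN => ?_
  have hempty : e = ∅ :=
    (disjoint_self_iff_empty e).1 (hUW.mono (hM.edge_subset heM) (hN.edge_subset heN))
  have := hH e (hM.subset heM)
  rw [hempty, card_empty] at this
  omega

lemma union (hM : IsPerfectMatchingOn H M U) (hN : IsPerfectMatchingOn H N W)
    (hUW : Disjoint U W) : IsPerfectMatchingOn H (M ∪ N) (U ∪ W) where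
  subset := union_subset hM.subset hN.subset
  pairwiseDisjoint := by
    rw [coe_union, Set.pairwiseDisjoint_union]
    exact ⟨hM.pairwiseDisjoint, hN.pairwiseDisjoint, fun e he f hf _ =>
      hUW.mono (hM.edge_subset he) (hN.edge_subset hf)⟩
  biUnion_eq := by rw [union_biUnion, hM.biUnion_eq, hN.biUnion_eq]

end IsPerfectMatchingOn

end PerfectMatchingOn

section Asymptotics

open Filter Topology Asymptotics

lemma isEquivalent_choose_pred (j : ℕ) :
    (fun n : ℕ => ((n - 1).choose j : ℝ)) ~[atTop] fun n : ℕ => (n : ℝ) ^ j / j.factorial := by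
  have hpred : (fun n : ℕ => ((n - 1 : ℕ) : ℝ)) ~[atTop] fun n : ℕ => (n : ℝ) := by
    have hsub : (fun n : ℕ => (n : ℝ) - 1) ~[atTop] fun n : ℕ => (n : ℝ) :=
      IsEquivalent.refl.sub_isLittleO
        ((isLittleO_const_id_atTop (1 : ℝ)).comp_tendsto tendsto_natCast_atTop_atTop)
    refine hsub.congr_left ?_
    filter_upwards [eventually_ge_atTop 1] with n hn
    exact (Nat.cast_pred hn).symm
  exact ((isEquivalent_choose j).comp_tendsto (tendsto_sub_atTop_nat 1)).trans
    ((hpred.pow j).div IsEquivalent.refl)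

lemma tendsto_choose_pred_atTop {j : ℕ} (hj : j ≠ 0) :
    Tendsto (fun n : ℕ => ((n - 1).choose j : ℝ)) atTop atTop :=
  (isEquivalent_choose_pred j).symm.tendsto_atTop <|
    ((tendsto_pow_atTop hj).comp tendsto_natCast_atTop_atTop).atTop_div_const (by positivity)

lemma eventually_pow_le_mul_choose_pred (j : ℕ) {c : ℝ} (hc : 1 < c) :
    ∀ᶠ n : ℕ in atTop, (n : ℝ) ^ j ≤ c * (j.factorial * ((n - 1).choose j : ℝ)) := by
  obtain ⟨φ, hφ, heq⟩ := (isEquivalent_choose_pred j).symm.exists_eq_mul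
  filter_upwards [heq, hφ.eventually_lt_const hc] with n hn hφn
  calc (n : ℝ) ^ j = j.factorial * ((n : ℝ) ^ j / j.factorial) := by field_simp
    _ = φ n * (j.factorial * ((n - 1).choose j : ℝ)) := by
        rw [hn]
        simp only [Pi.mul_apply]
        ring
    _ ≤ c * (j.factorial * ((n - 1).choose j : ℝ)) := by gcongr

lemma factorial_mul_choose_pred_le_pow (j n : ℕ) :
    (j.factorial * ((n - 1).choose j : ℝ)) ≤ (n : ℝ) ^ j := by
  have h := Nat.choose_le_pow_div (α := ℝ) j (n - 1)
  rw [le_div_iff₀' (by positivity)] at h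
  exact h.trans (by gcongr; exact n.sub_le 1)

end Asymptotics

section MatchingThreshold

open Filter

variable {k : ℕ}

lemma choose_pred_add_one_forces_isPM (k n : ℕ) :
    (n - 1).choose (k - 1) + 1 ∈ {m : ℕ | ∀ H : Finset (Finset (Fin n)), HyperUniform k H →
      (∀ v : Fin n, m ≤ hdeg H v) → ∃ M, IsPM H M} := by
  intro H hH hdeg_ge
  rcases Nat.eq_zero_or_pos n with rfl | hn
  · exact ⟨∅, by simp [IsPM]⟩
  · have h := (hdeg_ge ⟨0, hn⟩).trans (hdeg_le_choose hH _)
    rw [Fintype.card_fin] at h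
    omega

lemma exists_isPM_of_mThr_le {n : ℕ} {H : Finset (Finset (Fin n))} (hH : HyperUniform k H)
    (hdeg_ge : ∀ v, mThr k n ≤ hdeg H v) : ∃ M, IsPM H M :=
  Nat.sInf_mem ⟨_, choose_pred_add_one_forces_isPM k n⟩ H hH hdeg_ge

lemma mThr_div_choose_le_two (k n : ℕ) :
    (mThr k n : ℝ) / ((n - 1).choose (k - 1) : ℝ) ≤ 2 := by
  have hle : mThr k n ≤ (n - 1).choose (k - 1) + 1 :=
    Nat.sInf_le (choose_pred_add_one_forces_isPM k n)
  rcases Nat.eq_zero_or_pos ((n - 1).choose (k - 1)) with h0 | hpos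
  · simp [h0]
  · rw [div_le_iff₀ (by exact_mod_cast hpos)]
    have : mThr k n ≤ 2 * (n - 1).choose (k - 1) := by omega
    exact_mod_cast this

lemma fThr_le_of_eventually (hk : 1 ≤ k) {x : ℝ}
    (h : ∀ᶠ n : ℕ in atTop, k ∣ n → (mThr k n : ℝ) / ((n - 1).choose (k - 1) : ℝ) ≤ x) :
    fThr k ≤ x := by
  have : (atTop ⊓ 𝓟 {n : ℕ | k ∣ n}).NeBot := by
    rw [← frequently_mem_iff_neBot, frequently_atTop]
    exact fun a => ⟨k * a, Nat.le_mul_of_pos_left a hk, Dvd.intro a rfl⟩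
  refine limsup_le_of_le ?_ (eventually_inf_principal.2 h)
  exact (isBoundedUnder_of ⟨0, fun n => by positivity⟩).isCoboundedUnder_le

lemma eventually_exists_isPM (k : ℕ) {x : ℝ} (hx : fThr k < x) :
    ∀ᶠ n : ℕ in atTop, k ∣ n → ∀ H : Finset (Finset (Fin n)), HyperUniform k H →
      (∀ v, x * ((n - 1).choose (k - 1) : ℝ) ≤ hdeg H v) → ∃ M, IsPM H M := by
  have hlt : ∀ᶠ n : ℕ in atTop, k ∣ n → (mThr k n : ℝ) / ((n - 1).choose (k - 1) : ℝ) < x :=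
    eventually_inf_principal.1 <|
      eventually_lt_of_limsup_lt hx (isBoundedUnder_of ⟨2, mThr_div_choose_le_two k⟩)
  filter_upwards [hlt, eventually_ge_atTop k] with n hn hkn hdvd H hH hdeg_ge
  refine exists_isPM_of_mThr_le hH fun v => ?_
  have hpos : 0 < (n - 1).choose (k - 1) := Nat.choose_pos (by omega)
  have hlt := hn hdvd
  rw [div_lt_iff₀ (by exact_mod_cast hpos)] at hlt
  exact_mod_cast hlt.le.trans (hdeg_ge v)

end MatchingThreshold

lemma exists_isPerfectMatchingOn (k : ℕ) {x : ℝ} (hx : fThr k < x) :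
    ∃ n₀ : ℕ, ∀ {V : Type*} [DecidableEq V] (H : Finset (Finset V)) (U : Finset V),
      n₀ ≤ #U → k ∣ #U → HyperUniform k H →
      (∀ v ∈ U, x * ((#U - 1).choose (k - 1) : ℝ) ≤ (#{T ∈ link H v | T ⊆ U} : ℝ)) →
      ∃ M, IsPerfectMatchingOn H M U := by
  obtain ⟨n₀, hn₀⟩ := Filter.eventually_atTop.1 (eventually_exists_isPM k hx)
  refine ⟨n₀, fun {V} _ H U hU hdvd hH hdeg_ge => ?_⟩
  let φ : Fin #U ↪ V := U.equivFin.symm.toEmbedding.trans (Function.Embedding.subtype (· ∈ U))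
  have hφ : univ.map φ = U := by
    rw [← map_map, map_univ_equiv]
    exact attach_map_val
  let H' : Finset (Finset (Fin #U)) := {e | e.map φ ∈ H}
  have mem_H' {e} : e ∈ H' ↔ e.map φ ∈ H := by simp [H']
  have hH' : HyperUniform k H' := fun e he => by rw [← hH _ (mem_H'.1 he), card_map]
  have hlink (v : Fin #U) : {T ∈ link H (φ v) | T ⊆ U} ⊆ (link H' v).image (map φ) := by
    intro T hT
    obtain ⟨hT, hTU⟩ := mem_filter.1 hT
    obtain ⟨T, -, rfl⟩ := subset_map_iff.1 (hTU.trans_eq hφ.symm)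
    rw [mem_link, mem_map', ← map_insert] at hT
    exact mem_image_of_mem _ (mem_link.2 ⟨hT.1, mem_H'.2 hT.2⟩)
  obtain ⟨M, hM⟩ := hn₀ #U hU hdvd H' hH' fun v => by
    refine (hdeg_ge (φ v) (hφ.subset (mem_map_of_mem φ (mem_univ v)))).trans ?_
    rw [← card_link]
    exact_mod_cast (card_le_card (hlink v)).trans card_image_le
  obtain ⟨hMH, hdisj, hcover⟩ := isPM_iff_isPerfectMatchingOn_univ.1 hM
  refine ⟨M.image (map φ), ?_, ?_, ?_⟩
  · exact image_subset_iff.2 fun e he => mem_H'.1 (hMH he)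
  · rw [coe_image]
    rintro _ ⟨e, he, rfl⟩ _ ⟨f, hf, rfl⟩ hef
    exact (disjoint_map φ).2 (hdisj he hf fun h => hef (h ▸ rfl))
  · calc (M.image (map φ)).biUnion id = (M.biUnion id).map φ := by
          rw [image_biUnion, map_eq_image, biUnion_image]
          simp only [id, map_eq_image]
      _ = U := by rw [hcover, hφ]

section LowerBoundsForMatchingThreshold

open Filter

lemma fThr_le_of_discProp {k r : ℕ} (hk : 2 ≤ k) (hr : 1 ≤ r) {h : ℝ} (hh : 0 ≤ h)
    (hD : DiscProp k r h) : fThr k ≤ h := by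
  refine le_of_forall_pos_le_add fun ε hε => fThr_le_of_eventually (by omega) ?_
  obtain ⟨δ, -, n₀, hn₀⟩ := hD (ε / 2) (half_pos hε)
  have hlarge := (tendsto_choose_pred_atTop (j := k - 1) (by omega)).eventually_ge_atTop (2 / ε)
  filter_upwards [eventually_ge_atTop n₀, hlarge] with n hn hC hdvd
  set C : ℝ := ((n - 1).choose (k - 1) : ℝ)
  have hCpos : 0 < C := lt_of_lt_of_le (by positivity) hC
  have hm : mThr k n ≤ ⌈(h + ε / 2) * C⌉₊ := Nat.sInf_le fun H hH hdeg_ge => by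
    obtain ⟨M, hM, -⟩ := hn₀ n hn hdvd H hH
      (fun v => (Nat.le_ceil _).trans (by exact_mod_cast hdeg_ge v)) fun _ => ⟨0, hr⟩
    exact ⟨M, hM⟩
  rw [div_le_iff₀ hCpos]
  rw [div_le_iff₀ hε] at hC
  calc (mThr k n : ℝ) ≤ ⌈(h + ε / 2) * C⌉₊ := by exact_mod_cast hm
    _ ≤ (h + ε / 2) * C + 1 := (Nat.ceil_lt_add_one (by positivity)).le
    _ ≤ (h + ε) * C := by linarith

section SpaceBarrier

variable {V : Type*} [DecidableEq V] [Fintype V]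

/-- The space barrier: all `k`-sets meeting `A`. It has no perfect matching if `k * #A < #V`. -/
def spaceBarrier (k : ℕ) (A : Finset V) : Finset (Finset V) :=
  {e ∈ univ.powersetCard k | ¬Disjoint e A}

lemma mem_spaceBarrier {k : ℕ} {A e : Finset V} :
    e ∈ spaceBarrier k A ↔ #e = k ∧ ¬Disjoint e A := by
  simp [spaceBarrier, mem_powersetCard]

lemma hyperUniform_spaceBarrier (k : ℕ) (A : Finset V) : HyperUniform k (spaceBarrier k A) :=
  fun _ he => (mem_spaceBarrier.1 he).1

lemma choose_le_hdeg_spaceBarrier_add {k : ℕ} (hk : 1 ≤ k) (A : Finset V) (v : V) :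
    (Fintype.card V - 1).choose (k - 1) ≤
      hdeg (spaceBarrier k A) v + (Fintype.card V - 1 - #A).choose (k - 1) := by
  have hlink {T : Finset V} (hT : T ∈ (univ.erase v).powersetCard (k - 1))
      (hA : ¬Disjoint (insert v T) A) : T ∈ link (spaceBarrier k A) v := by
    obtain ⟨hvT, hcard⟩ := mem_powersetCard.1 hT
    have hv : v ∉ T := (subset_erase.1 hvT).2
    refine mem_link.2 ⟨hv, mem_spaceBarrier.2 ⟨?_, hA⟩⟩
    rw [card_insert_of_notMem hv, hcard, Nat.sub_add_cancel hk]
  have hcard : #(univ.erase v) = Fintype.card V - 1 := card_erase_of_mem (mem_univ v)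
  rw [← hcard, ← card_powersetCard, ← card_link]
  by_cases hvA : v ∈ A
  · exact le_add_right (card_le_card fun T hT =>
      hlink hT (not_disjoint_iff.2 ⟨v, mem_insert_self v T, hvA⟩))
  · have hA : A ⊆ univ.erase v := subset_erase.2 ⟨subset_univ A, hvA⟩
    rw [← card_sdiff_of_subset hA, ← card_powersetCard]
    refine le_trans (card_le_card fun T hT => ?_) (card_union_le _ _)
    by_cases hTA : Disjoint (insert v T) A
    · obtain ⟨hvT, hTcard⟩ := mem_powersetCard.1 hT
      exact mem_union_right _ (mem_powersetCard.2
        ⟨subset_sdiff.2 ⟨hvT, hTA.mono_left (subset_insert v T)⟩, hTcard⟩)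
    · exact mem_union_left _ (hlink hT hTA)

lemma card_le_mul_of_isPM_spaceBarrier {k : ℕ} {A : Finset V} {M : Finset (Finset V)}
    (hM : IsPM (spaceBarrier k A) M) : Fintype.card V ≤ #A * k := by
  have hM := isPM_iff_isPerfectMatchingOn_univ.1 hM
  have hMA : #M ≤ #A := calc
    #M ≤ #(M.biUnion (· ∩ A)) := card_le_card_biUnion
        (fun e he f hf hef => (hM.pairwiseDisjoint he hf hef).mono inter_subset_left
          inter_subset_left)
        fun e he => not_disjoint_iff_nonempty_inter.1 (mem_spaceBarrier.1 (hM.subset he)).2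
    _ ≤ #A := card_le_card (biUnion_subset.2 fun e _ => inter_subset_right)
  rw [← card_univ, hM.card_eq (hyperUniform_spaceBarrier k A)]
  exact Nat.mul_le_mul_right k hMA

end SpaceBarrier

lemma eventually_choose_le_mul_choose_pred {k : ℕ} (hk : 2 ≤ k) {y : ℝ}
    (hy : (1 - 1 / (k : ℝ)) ^ (k - 1) < y) :
    ∀ᶠ m : ℕ in atTop, (((k - 1) * m).choose (k - 1) : ℝ) ≤
      y * ((k * m - 1).choose (k - 1) : ℝ) := by
  set L : ℝ := (1 - 1 / (k : ℝ)) ^ (k - 1) with hL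
  have hkpos : (0 : ℝ) < k := by exact_mod_cast (by omega : 0 < k)
  have hLpos : 0 < L := pow_pos (by
    rw [sub_pos, div_lt_one hkpos]
    exact_mod_cast (by omega : 1 < k)) _
  have hkm : Tendsto (fun m => k * m) atTop atTop := tendsto_id.const_mul_atTop' (by omega)
  filter_upwards [hkm.eventually
    (eventually_pow_le_mul_choose_pred (k - 1) ((one_lt_div hLpos).2 hy))] with m hm
  have hpow : (((k - 1) * m : ℕ) : ℝ) ^ (k - 1) = L * ((k * m : ℕ) : ℝ) ^ (k - 1) := by
    rw [hL, ← mul_pow]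
    congr 1
    push_cast [show 1 ≤ k by omega]
    field_simp
  calc (((k - 1) * m).choose (k - 1) : ℝ)
      ≤ (((k - 1) * m : ℕ) : ℝ) ^ (k - 1) / (k - 1).factorial := Nat.choose_le_pow_div _ _
    _ = L * ((k * m : ℕ) : ℝ) ^ (k - 1) / (k - 1).factorial := by rw [hpow]
    _ ≤ L * (y / L * ((k - 1).factorial * ((k * m - 1).choose (k - 1) : ℝ))) /
          (k - 1).factorial := by gcongr
    _ = y * ((k * m - 1).choose (k - 1) : ℝ) := by field_simp

lemma one_sub_pow_le_fThr {k : ℕ} (hk : 2 ≤ k) : 1 - (1 - 1 / (k : ℝ)) ^ (k - 1) ≤ fThr k := by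
  by_contra! hlt
  obtain ⟨x, hfx, hx⟩ := exists_between hlt
  have hkm : Tendsto (fun m => k * m) atTop atTop := tendsto_id.const_mul_atTop' (by omega)
  obtain ⟨m, hpm, hchoose, hm⟩ := ((hkm.eventually (eventually_exists_isPM k hfx)).and
    ((eventually_choose_le_mul_choose_pred hk (lt_sub_comm.1 hx)).and
      (eventually_ge_atTop 1))).exists
  have hle : m - 1 ≤ Fintype.card (Fin (k * m)) := by
    rw [Fintype.card_fin]
    exact (m.sub_le 1).trans (Nat.le_mul_of_pos_left m (by omega))
  obtain ⟨A, -, hA⟩ := exists_subset_card_eq (s := (univ : Finset (Fin (k * m)))) hle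
  obtain ⟨M, hM⟩ := hpm (Dvd.intro m rfl) (spaceBarrier k A) (hyperUniform_spaceBarrier k A)
    fun v => by
      have hdeg_ge := choose_le_hdeg_spaceBarrier_add (k := k) (by omega) A v
      have hcompl : k * m - 1 - (m - 1) = (k - 1) * m := by
        rw [Nat.sub_mul]
        omega
      rw [Fintype.card_fin, hA, hcompl] at hdeg_ge
      have hcast : ((k * m - 1).choose (k - 1) : ℝ) ≤
          hdeg (spaceBarrier k A) v + (((k - 1) * m).choose (k - 1) : ℕ) := by
        exact_mod_cast hdeg_ge
      linarith
  have hcard := card_le_mul_of_isPM_spaceBarrier hM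
  rw [Fintype.card_fin, hA, Nat.sub_mul, mul_comm] at hcard
  have : k ≤ m * k := Nat.le_mul_of_pos_left k hm
  omega

lemma antitone_one_sub_inv_pow :
    Antitone fun m : ℕ => (1 - 1 / ((m : ℝ) + 1)) ^ m := by
  refine antitone_nat_of_succ_le fun m => ?_
  obtain rfl | hm := m.eq_zero_or_pos
  · norm_num
  set x : ℝ := m + 1 with hx
  have hx1 : 1 < x := by simpa [x] using hm
  have hbase : 0 < 1 - 1 / x := by rw [sub_pos, div_lt_one (by positivity)]; exact hx1
  have bernoulli : 1 - 1 / x ≤ (1 - 1 / x ^ 2) ^ (m + 1) := by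
    have hle : 1 / x ^ 2 ≤ 1 := by rw [div_le_one (by positivity)]; nlinarith
    calc 1 - 1 / x = 1 + ((m + 1 : ℕ) : ℝ) * -(1 / x ^ 2) := by push_cast [← hx]; field_simp; ring
      _ ≤ (1 + -(1 / x ^ 2)) ^ (m + 1) := one_add_mul_le_pow (by linarith) _
  refine le_of_mul_le_mul_left ?_ hbase
  push_cast
  calc (1 - 1 / x) * (1 - 1 / (x + 1)) ^ (m + 1)
      ≤ (1 - 1 / x ^ 2) ^ (m + 1) * (1 - 1 / (x + 1)) ^ (m + 1) := by
        refine mul_le_mul_of_nonneg_right bernoulli (pow_nonneg ?_ _)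
        rw [sub_nonneg, div_le_one (by positivity)]
        linarith
    _ = (1 - 1 / x) ^ (m + 1) := by
        rw [← mul_pow]
        congr 1
        field_simp
        ring
    _ = (1 - 1 / x) * (1 - 1 / x) ^ m := pow_succ' _ _

lemma seven_twelfths_le_fThr {k : ℕ} (hk : 5 ≤ k) : 7 / 12 ≤ fThr k := by
  have hpow := antitone_one_sub_inv_pow (show 4 ≤ k - 1 by omega)
  have hf := one_sub_pow_le_fThr (k := k) (by omega)
  simp only [Nat.cast_pred (show 0 < k by omega), sub_add_cancel] at hpow
  norm_num at hpow hf ⊢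
  linarith

lemma half_le_fThr {k : ℕ} (hk : 3 ≤ k) : 1 / 2 ≤ fThr k := by
  have hpow := antitone_one_sub_inv_pow (show 2 ≤ k - 1 by omega)
  have hf := one_sub_pow_le_fThr (k := k) (by omega)
  simp only [Nat.cast_pred (show 0 < k by omega), sub_add_cancel] at hpow
  norm_num at hpow hf ⊢
  linarith

end LowerBoundsForMatchingThreshold

section DividedPow

/-- The divided power `x ^ m / m!`, the continuous counterpart of the binomial coefficient
`x.choose m`. -/
noncomputable def dividedPow (m : ℕ) (x : ℝ) : ℝ := x ^ m / m.factorial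

lemma dividedPow_nonneg (m : ℕ) {x : ℝ} (hx : 0 ≤ x) : 0 ≤ dividedPow m x := by
  unfold dividedPow
  positivity

lemma dividedPow_le_dividedPow (m : ℕ) {x y : ℝ} (hx : 0 ≤ x) (hxy : x ≤ y) :
    dividedPow m x ≤ dividedPow m y := by
  unfold dividedPow
  gcongr

lemma card_le_dividedPow {V : Type*} {A : Finset (Finset V)} {S : Finset V} {m : ℕ}
    (hA : ∀ T ∈ A, T ⊆ S ∧ #T = m) {x : ℝ} (hx : #S ≤ x) : #A ≤ dividedPow m x :=
  calc (#A : ℝ) ≤ (#S).choose m := by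
        exact_mod_cast (card_le_card fun T hT => mem_powersetCard.2 (hA T hT)).trans_eq
          (card_powersetCard _ _)
    _ ≤ dividedPow m #S := Nat.choose_le_pow_div _ _
    _ ≤ dividedPow m x := dividedPow_le_dividedPow _ (Nat.cast_nonneg _) hx

lemma dividedPow_succ (m : ℕ) (x : ℝ) :
    dividedPow (m + 1) x = dividedPow m x * (x / (m + 1)) := by
  unfold dividedPow
  rw [pow_succ, Nat.factorial_succ]
  push_cast
  field_simp

lemma dividedPow_mul (m : ℕ) (c x : ℝ) : dividedPow m (c * x) = c ^ m * dividedPow m x := by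
  unfold dividedPow
  rw [mul_pow, mul_div_assoc]

lemma dividedPow_add (n : ℕ) (x y : ℝ) :
    dividedPow n (x + y) = ∑ m ∈ antidiagonal n, dividedPow m.1 x * dividedPow m.2 y := by
  unfold dividedPow
  rw [(Commute.all x y).add_pow', sum_div]
  refine sum_congr rfl fun m hm => ?_
  have hadd := HasAntidiagonal.mem_antidiagonal.1 hm
  have hmn : m.1 ≤ n := by omega
  have hsub : n - m.1 = m.2 := by omega
  rw [nsmul_eq_mul, Nat.cast_choose ℝ hmn, hsub]
  field_simp

lemma dividedPow_succ_sq_le (m : ℕ) (x : ℝ) :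
    dividedPow (m + 1) x ^ 2 ≤ 2 * (dividedPow m x * dividedPow (m + 2) x) := by
  have hratio : (1 / 2 : ℝ) ≤ ((m : ℝ) + 1) / (m + 2) := by
    rw [div_le_div_iff₀ (by norm_num) (by positivity)]
    linarith
  have hprod : dividedPow m x * dividedPow (m + 2) x =
      dividedPow (m + 1) x ^ 2 * (((m : ℝ) + 1) / (m + 2)) := by
    rw [dividedPow_succ (m + 1), dividedPow_succ m]
    push_cast
    field_simp
    ring
  rw [hprod]
  nlinarith [sq_nonneg (dividedPow (m + 1) x)]

lemma dividedPow_succ_mul_succ_le (s t : ℕ) {x y : ℝ} (hx : 0 ≤ x) (hy : 0 ≤ y) :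
    dividedPow (s + 1) x * dividedPow (t + 1) y ≤
      dividedPow s x * dividedPow (t + 2) y + dividedPow (s + 2) x * dividedPow t y := by
  have hx₀ (m) : 0 ≤ dividedPow m x := dividedPow_nonneg m hx
  have hy₀ (m) : 0 ≤ dividedPow m y := dividedPow_nonneg m hy
  set P := dividedPow s x * dividedPow (t + 2) y
  set Q := dividedPow (s + 2) x * dividedPow t y
  have hPQ : (dividedPow (s + 1) x * dividedPow (t + 1) y) ^ 2 ≤ 4 * (P * Q) :=
    calc _ = dividedPow (s + 1) x ^ 2 * dividedPow (t + 1) y ^ 2 := mul_pow _ _ _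
      _ ≤ (2 * (dividedPow s x * dividedPow (s + 2) x)) *
          (2 * (dividedPow t y * dividedPow (t + 2) y)) :=
        mul_le_mul (dividedPow_succ_sq_le s x) (dividedPow_succ_sq_le t y) (sq_nonneg _)
          (mul_nonneg zero_le_two (mul_nonneg (hx₀ _) (hx₀ _)))
      _ = 4 * (P * Q) := by ring
  have hsum : 0 ≤ P + Q :=
    add_nonneg (mul_nonneg (hx₀ _) (hy₀ _)) (mul_nonneg (hx₀ _) (hy₀ _))
  exact le_of_sq_le_sq (by nlinarith [sq_nonneg (P - Q)]) hsum

/-- By log-concavity, the two neighbours of the `(s, t)` term of the binomial expansion sum to at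
least that term. -/
lemma two_mul_dividedPow_mul_le {s t : ℕ} (hs : 1 ≤ s) (ht : 1 ≤ t) {x y : ℝ} (hx : 0 ≤ x)
    (hy : 0 ≤ y) : 2 * (dividedPow s x * dividedPow t y) ≤ dividedPow (s + t) (x + y) := by
  obtain ⟨s, rfl⟩ := Nat.exists_eq_add_of_le' hs
  obtain ⟨t, rfl⟩ := Nat.exists_eq_add_of_le' ht
  have hsub : ({(s, t + 2), (s + 1, t + 1), (s + 2, t)} : Finset (ℕ × ℕ)) ⊆
      antidiagonal (s + 1 + (t + 1)) := by
    simp only [insert_subset_iff, singleton_subset_iff,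
      HasAntidiagonal.mem_antidiagonal]
    exact ⟨by omega, trivial, by omega⟩
  have hthree : dividedPow s x * dividedPow (t + 2) y +
      (dividedPow (s + 1) x * dividedPow (t + 1) y + dividedPow (s + 2) x * dividedPow t y) ≤
      dividedPow (s + 1 + (t + 1)) (x + y) := by
    rw [dividedPow_add]
    refine le_of_eq_of_le ?_ (sum_le_sum_of_subset_of_nonneg hsub fun m _ _ =>
      mul_nonneg (dividedPow_nonneg _ hx) (dividedPow_nonneg _ hy))
    rw [sum_insert (by simp), sum_insert (by simp), sum_singleton]
  linarith [dividedPow_succ_mul_succ_le s t hx hy]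

lemma four_mul_dividedPow_mul_mul_le {s t u : ℕ} (hs : 1 ≤ s) (ht : 1 ≤ t) (hu : 1 ≤ u)
    {x y z : ℝ} (hx : 0 ≤ x) (hy : 0 ≤ y) (hz : 0 ≤ z) :
    4 * (dividedPow s x * dividedPow t y * dividedPow u z) ≤
      dividedPow (s + t + u) (x + y + z) :=
  calc _ = 2 * (2 * (dividedPow s x * dividedPow t y) * dividedPow u z) := by ring
    _ ≤ 2 * (dividedPow (s + t) (x + y) * dividedPow u z) := by
      gcongr
      · exact dividedPow_nonneg u hz
      · exact two_mul_dividedPow_mul_le hs ht hx hy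
    _ ≤ _ := two_mul_dividedPow_mul_le (le_add_right hs) hu (add_nonneg hx hy) hz

end DividedPow

section DividedMonomial

variable {ι : Type*} [Fintype ι]

/-- The product of divided powers `∏ l, x l ^ s l / (s l)!`: up to lower-order terms, the number of
sets with index vector `s` when the `l`-th part has `x l` vertices. -/
noncomputable def dividedMonomial (s : ι → ℕ) (x : ι → ℝ) : ℝ := ∏ l, dividedPow (s l) (x l)

lemma dividedMonomial_mul (s : ι → ℕ) (c : ℝ) (x : ι → ℝ) :
    dividedMonomial s (fun l => c * x l) = c ^ (∑ l, s l) * dividedMonomial s x := by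
  simp only [dividedMonomial, dividedPow_mul, prod_mul_distrib, prod_pow_eq_pow_sum]

lemma dividedMonomial_eq_div (s : ι → ℕ) (x : ι → ℝ) :
    dividedMonomial s x = (∏ l, x l ^ s l) / ∏ l, ((s l).factorial : ℝ) := prod_div_distrib ..

variable [DecidableEq ι]

lemma dividedMonomial_add_single (s : ι → ℕ) (i : ι) (x : ι → ℝ) :
    dividedMonomial (s + Pi.single i 1) x = dividedMonomial s x * (x i / (s i + 1)) := by
  have hrest : ∏ l ∈ univ.erase i, dividedPow ((s + Pi.single i 1 : ι → ℕ) l) (x l) =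
      ∏ l ∈ univ.erase i, dividedPow (s l) (x l) :=
    prod_congr rfl fun l hl => by simp [Pi.single_eq_of_ne (ne_of_mem_erase hl)]
  rw [dividedMonomial, dividedMonomial, ← mul_prod_erase univ _ (mem_univ i),
    ← mul_prod_erase univ _ (mem_univ i), hrest, Pi.add_apply, Pi.single_eq_same, dividedPow_succ]
  ring

end DividedMonomial

section CountingSets

variable {V ι : Type*} [Fintype ι] [DecidableEq ι]

lemma card_filter_indexVector_mem (p : V → ι) (U : Finset V) (S : Finset (ι → ℕ)) :
    #{T ∈ U.powerset | indexVector p T ∈ S} = ∑ s ∈ S, ∏ i, (indexVector p U i).choose (s i) := by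
  simp only [← card_filter_indexVector_eq]
  rw [card_eq_sum_card_fiberwise (s := {T ∈ U.powerset | indexVector p T ∈ S})
    (f := indexVector p) (t := S) fun T hT => (mem_filter.1 hT).2]
  refine sum_congr rfl fun s hs => congrArg card ?_
  rw [filter_filter]
  exact filter_congr fun T _ => ⟨fun h => h.2, fun h => ⟨h ▸ hs, h⟩⟩

lemma card_filter_indexVector_mem_le (p : V → ι) (U : Finset V) (S : Finset (ι → ℕ)) :
    (#{T ∈ U.powerset | indexVector p T ∈ S} : ℝ) ≤
      ∑ s ∈ S, dividedMonomial s fun l => indexVector p U l := by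
  rw [card_filter_indexVector_mem]
  push_cast
  exact sum_le_sum fun s _ =>
    prod_le_prod (fun l _ => Nat.cast_nonneg _) fun l _ => Nat.choose_le_pow_div _ _

lemma le_card_filter_indexVector_mem (p : V → ι) (U : Finset V) (S : Finset (ι → ℕ)) {x : ι → ℝ}
    (hx : ∀ l, 0 ≤ x l) (hU : ∀ s ∈ S, ∀ l, x l + s l ≤ indexVector p U l + 1) :
    ∑ s ∈ S, dividedMonomial s x ≤ (#{T ∈ U.powerset | indexVector p T ∈ S} : ℝ) := by
  rw [card_filter_indexVector_mem]
  push_cast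
  refine sum_le_sum fun s hs => prod_le_prod (fun l _ => dividedPow_nonneg _ (hx l)) fun l _ => ?_
  refine le_trans ?_ (Nat.pow_le_choose (α := ℝ) (s l) (indexVector p U l))
  refine dividedPow_le_dividedPow _ (hx l) ?_
  have hle : s l ≤ indexVector p U l + 1 := by
    exact_mod_cast (le_add_of_nonneg_left (hx l)).trans (hU s hs l)
  rw [Nat.cast_sub hle, le_sub_iff_add_le]
  exact_mod_cast hU s hs l

end CountingSets

section LinkDensity

variable {ι : Type*} [Fintype ι] [DecidableEq ι]

/-- The index vectors that a set `T` must have so that adding a vertex of the `j`-th part to `T`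
produces a set with index vector `a + Pi.single i 1` for some `i`. -/
def linkVectors (a : ι → ℕ) (j : ι) : Finset (ι → ℕ) :=
  ({i | i = j ∨ 0 < a j} : Finset ι).image fun i => a + Pi.single i 1 - Pi.single j 1

omit [Fintype ι] in
lemma add_single_sub_single_add_single {a : ι → ℕ} {i j : ι} (h : i = j ∨ 0 < a j) :
    a + Pi.single i 1 - Pi.single j 1 + Pi.single j 1 = a + Pi.single i 1 := by
  refine tsub_add_cancel_of_le fun l => ?_
  obtain rfl | hl := eq_or_ne l j
  · obtain rfl | h := h
    · simp
    · simpa using le_add_right h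
  · simp [hl]

lemma mem_linkVectors {a s : ι → ℕ} {j : ι} :
    s ∈ linkVectors a j ↔ ∃ i, s + Pi.single j 1 = a + Pi.single i 1 := by
  simp only [linkVectors, mem_image, mem_filter, mem_univ, true_and]
  constructor
  · rintro ⟨i, hi, rfl⟩
    exact ⟨i, add_single_sub_single_add_single hi⟩
  · rintro ⟨i, hi⟩
    refine ⟨i, or_iff_not_imp_left.2 fun hij => ?_, by rw [← hi, add_tsub_cancel_right]⟩
    have hj : s j + 1 = a j := by simpa [Ne.symm hij] using congrFun hi j
    omega

lemma sum_eq_of_mem_linkVectors {a s : ι → ℕ} {j : ι} (hs : s ∈ linkVectors a j) :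
    ∑ l, s l = ∑ l, a l := by
  obtain ⟨i, hi⟩ := mem_linkVectors.1 hs
  have h : ∑ l, (s + Pi.single j 1 : ι → ℕ) l = ∑ l, (a + Pi.single i 1 : ι → ℕ) l := by rw [hi]
  simpa [sum_add_distrib] using h

/-- The asymptotic number of sets with index vector in `linkVectors a j` when the parts have
sizes `x`. -/
noncomputable def linkDensity (a : ι → ℕ) (j : ι) (x : ι → ℝ) : ℝ :=
  ∑ s ∈ linkVectors a j, dividedMonomial s x

lemma continuous_linkDensity (a : ι → ℕ) (j : ι) : Continuous (linkDensity a j) := by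
  unfold linkDensity dividedMonomial dividedPow
  fun_prop

lemma linkDensity_nonneg (a : ι → ℕ) (j : ι) {x : ι → ℝ} (hx : ∀ l, 0 ≤ x l) :
    0 ≤ linkDensity a j x :=
  sum_nonneg fun _ _ => prod_nonneg fun l _ => dividedPow_nonneg _ (hx l)

lemma linkDensity_mul (a : ι → ℕ) (j : ι) (c : ℝ) (x : ι → ℝ) :
    linkDensity a j (fun l => c * x l) = c ^ (∑ l, a l) * linkDensity a j x := by
  rw [linkDensity, linkDensity, mul_sum]
  refine sum_congr rfl fun s hs => ?_
  rw [dividedMonomial_mul, sum_eq_of_mem_linkVectors hs]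

lemma dividedMonomial_add_single_sub_single {a : ι → ℕ} {i j : ι} (hij : i ≠ j) (ha : 0 < a j)
    {x : ι → ℝ} (hx : x j ≠ 0) :
    dividedMonomial (a + Pi.single i 1 - Pi.single j 1) x =
      dividedMonomial a x * (a j / x j * (x i / (a i + 1))) := by
  set s := a + Pi.single i 1 - Pi.single j 1
  have hadd : s + Pi.single j 1 = a + Pi.single i 1 :=
    add_single_sub_single_add_single (Or.inr ha)
  have hsj : s j + 1 = a j := by simpa [Ne.symm hij] using congrFun hadd j
  have hsj' : (s j : ℝ) + 1 = a j := by exact_mod_cast hsj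
  have ha' : (a j : ℝ) ≠ 0 := by exact_mod_cast ha.ne'
  have key : dividedMonomial s x * (x j / a j) = dividedMonomial a x * (x i / (a i + 1)) := by
    rw [← hsj', ← dividedMonomial_add_single, ← dividedMonomial_add_single, hadd]
  calc dividedMonomial s x = dividedMonomial s x * (x j / a j) * (a j / x j) := by field_simp
    _ = _ := by rw [key]; ring

lemma linkDensity_eq (a : ι → ℕ) {j : ι} {x : ι → ℝ} (hx : x j ≠ 0) :
    linkDensity a j x =
      dividedMonomial a x * (1 + a j / x j * ∑ i ∈ univ.erase j, x i / (a i + 1)) := by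
  set I : Finset ι := {i | i = j ∨ 0 < a j}
  have hinj : Set.InjOn (fun i => a + Pi.single i 1 - Pi.single j 1) (I : Set ι) := by
    intro i hi i' hi' h
    have hi := add_single_sub_single_add_single (mem_filter.1 (mem_coe.1 hi)).2
    have hi' := add_single_sub_single_add_single (mem_filter.1 (mem_coe.1 hi')).2
    have hsingle : (Pi.single i 1 : ι → ℕ) = Pi.single i' 1 :=
      add_left_cancel (hi.symm.trans ((congrArg (· + Pi.single j 1) h).trans hi'))
    by_contra hne
    simpa [hne] using congrFun hsingle i
  have hj : j ∈ I := by simp [I]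
  rw [linkDensity, linkVectors, sum_image hinj, ← add_sum_erase _ _ hj, add_tsub_cancel_right,
    mul_add, mul_one, mul_sum, mul_sum]
  congr 1
  obtain h0 | h0 := (a j).eq_zero_or_pos
  · have : I.erase j = ∅ := by
      ext i
      simp [I, h0]
    simp [this, h0]
  · have : I = univ := by simp [I, h0]
    rw [this]
    exact sum_congr rfl fun i hi =>
      dividedMonomial_add_single_sub_single (ne_of_mem_erase hi) h0 hx

end LinkDensity

section CriticalPoint

variable {r k : ℕ}

/-- The proportions of the extremal construction for the vector `a`: if the parts have these
proportions and every edge has index vector `a + Pi.single i 1` for its colour `i`, then in every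
perfect matching all colours occur equally often. -/
noncomputable def criticalPoint (k : ℕ) (a : Fin r → ℕ) (l : Fin r) : ℝ := (r * a l + 1) / (r * k)

lemma criticalPoint_pos (hk : 1 ≤ k) (a : Fin r → ℕ) (l : Fin r) : 0 < criticalPoint k a l := by
  have : 0 < r := l.pos
  unfold criticalPoint
  positivity

/-- The asymptotic relative degree of a vertex in the `j`-th part of the extremal construction for
the vector `a`. -/
noncomputable def vertexDensity (k : ℕ) (a : Fin r → ℕ) (j : Fin r) : ℝ :=
  (k - 1).factorial * linkDensity a j (criticalPoint k a)

lemma vertexDensity_eq (hk : 1 ≤ k) (a : Fin r → ℕ) (j : Fin r) :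
    vertexDensity k a j = (k - 1).factorial * dividedMonomial a (criticalPoint k a) *
      (1 + a j / (r * a j + 1) * ∑ i ∈ univ.erase j, ((r * a i + 1 : ℝ) / (a i + 1))) := by
  have hr : 0 < r := j.pos
  rw [vertexDensity, linkDensity_eq a (criticalPoint_pos hk a j).ne', mul_assoc, mul_sum, mul_sum]
  congr 3
  refine sum_congr rfl fun i _ => ?_
  unfold criticalPoint
  field_simp

lemma vertexDensity_comp_perm (hk : 1 ≤ k) (a : Fin r → ℕ) (σ : Equiv.Perm (Fin r)) (j : Fin r) :
    vertexDensity k (a ∘ σ) j = vertexDensity k a (σ j) := by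
  have hprod : dividedMonomial (a ∘ σ) (criticalPoint k (a ∘ σ)) =
      dividedMonomial a (criticalPoint k a) :=
    Equiv.prod_comp σ fun l => dividedPow (a l) (criticalPoint k a l)
  have hsum : ∑ i ∈ univ.erase j, ((r * (a ∘ σ) i + 1 : ℝ) / ((a ∘ σ) i + 1)) =
      ∑ i ∈ univ.erase (σ j), ((r * a i + 1 : ℝ) / (a i + 1)) := by
    refine sum_equiv σ (fun i => ?_) fun i _ => rfl
    simp
  rw [vertexDensity_eq hk, vertexDensity_eq hk, hprod, hsum]
  rfl

lemma div_mul_sub_mono {R x y S : ℝ} (hR : 0 ≤ R) (hx : 0 ≤ x) (hxy : x ≤ y)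
    (hS : (R * x + 1) * (R * y + 1) ≤ S * ((x + 1) * (y + 1))) :
    x / (R * x + 1) * (S - (R * x + 1) / (x + 1)) ≤
      y / (R * y + 1) * (S - (R * y + 1) / (y + 1)) := by
  have hy : 0 ≤ y := hx.trans hxy
  have hdiff : y / (R * y + 1) * (S - (R * y + 1) / (y + 1)) -
      x / (R * x + 1) * (S - (R * x + 1) / (x + 1)) =
      (y - x) * (S * ((x + 1) * (y + 1)) - (R * x + 1) * (R * y + 1)) /
        ((R * x + 1) * (R * y + 1) * ((x + 1) * (y + 1))) := by
    field_simp
    ring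
  rw [← sub_nonneg, hdiff]
  exact div_nonneg (mul_nonneg (sub_nonneg.2 hxy) (sub_nonneg.2 hS)) (by positivity)

lemma vertexDensity_le_of_forall_le (hk : 1 ≤ k) {a : Fin r → ℕ} {j₀ : Fin r}
    (hmin : ∀ l, a j₀ ≤ a l) (j : Fin r) : vertexDensity k a j₀ ≤ vertexDensity k a j := by
  have hr : (1 : ℝ) ≤ r := by exact_mod_cast j.pos
  have hmin' (l) : (a j₀ : ℝ) ≤ a l := by exact_mod_cast hmin l
  have hx : (0 : ℝ) ≤ a j₀ := Nat.cast_nonneg _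
  have hy : (0 : ℝ) ≤ a j := Nat.cast_nonneg _
  set q : Fin r → ℝ := fun i => (r * a i + 1 : ℝ) / (a i + 1) with hq
  have hqmin (i) : q j₀ ≤ q i := by
    simp only [hq]
    rw [div_le_div_iff₀ (by positivity) (by positivity)]
    nlinarith [hmin' i]
  have hsum : (r - 1) * q j₀ + q j ≤ ∑ i, q i := by
    rw [← sum_erase_add univ q (mem_univ j)]
    gcongr
    have := card_nsmul_le_sum (univ.erase j) q (q j₀) fun i _ => hqmin i
    rwa [card_erase_of_mem (mem_univ j), card_univ, Fintype.card_fin, nsmul_eq_mul,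
      Nat.cast_pred j.pos] at this
  have hS : ((r : ℝ) * a j₀ + 1) * (r * a j + 1) ≤ (∑ i, q i) * ((a j₀ + 1) * (a j + 1)) :=
    calc ((r : ℝ) * a j₀ + 1) * (r * a j + 1)
        ≤ (r - 1) * (r * a j₀ + 1) * (a j + 1) + (r * a j + 1) * (a j₀ + 1) := by
          nlinarith [mul_nonneg hx (sq_nonneg ((r : ℝ) - 1)), mul_nonneg hy (sub_nonneg.2 hr)]
      _ = ((r - 1) * q j₀ + q j) * ((a j₀ + 1) * (a j + 1)) := by
          simp only [hq]
          field_simp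
      _ ≤ _ := by gcongr
  have herase (i) : ∑ l ∈ univ.erase i, q l = ∑ l, q l - q i := by
    rw [← sum_erase_add univ q (mem_univ i), add_sub_cancel_right]
  have hmono := div_mul_sub_mono (by positivity) hx (hmin' j) hS
  rw [vertexDensity_eq hk, vertexDensity_eq hk, herase, herase]
  refine mul_le_mul_of_nonneg_left (by gcongr) (mul_nonneg (Nat.cast_nonneg _) ?_)
  exact prod_nonneg fun l _ => dividedPow_nonneg _ (criticalPoint_pos hk a l).le

end CriticalPoint

section Threshold

variable {r k : ℕ}

lemma gfun_eq_vertexDensity (hk : 1 ≤ k) (hr : 0 < r) (a : ℕ → ℕ) :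
    gfun k r a = vertexDensity k (fun l : Fin r => a l) ⟨0, hr⟩ := by
  have hsum : ∑ i ∈ Ico 1 r, ((r * a i + 1 : ℕ) : ℝ) / ((a i + 1 : ℕ) : ℝ) =
      ∑ i ∈ univ.erase (⟨0, hr⟩ : Fin r), ((r * a i + 1 : ℝ) / (a i + 1)) := by
    have hfin := add_sum_erase univ (fun i : Fin r => (r * a i + 1 : ℝ) / (a i + 1))
      (mem_univ (⟨0, hr⟩ : Fin r))
    rw [Fin.sum_univ_eq_sum_range (fun i => (r * a i + 1 : ℝ) / (a i + 1)),
      sum_range_eq_add_Ico _ hr] at hfin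
    push_cast
    exact (add_left_cancel hfin).symm
  rw [vertexDensity_eq hk, dividedMonomial_eq_div, gfun, hsum]
  unfold criticalPoint
  rw [Fin.prod_univ_eq_prod_range (fun i => ((a i).factorial : ℝ)),
    Fin.prod_univ_eq_prod_range (fun i => ((r * a i + 1 : ℝ) / (r * k)) ^ a i)]
  push_cast
  ring

lemma bddAbove_gfun (hk : 1 ≤ k) (hr : 0 < r) :
    BddAbove {x : ℝ | ∃ a : ℕ → ℕ, IsVec k r a ∧ x = gfun k r a} := by
  refine Set.Finite.bddAbove ((Set.finite_range fun a : Fin r → Fin k =>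
    vertexDensity k (fun l => (a l : ℕ)) ⟨0, hr⟩).subset ?_)
  rintro x ⟨a, ha, rfl⟩
  have hlt (l : Fin r) : a l < k := by
    have := single_le_sum (f := a) (fun i _ => Nat.zero_le _) (mem_range.2 l.isLt)
    rw [ha.2] at this
    omega
  exact ⟨fun l => ⟨a l, hlt l⟩, (gfun_eq_vertexDensity hk hr a).symm⟩

lemma vertexDensity_le_gThr (hk : 1 ≤ k) {a : Fin r → ℕ} (ha : ∑ l, a l = k - 1) {j : Fin r}
    (hmin : ∀ l, a j ≤ a l) : vertexDensity k a j ≤ gThr k r := by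
  have hr : 0 < r := j.pos
  set σ := Tuple.sort a
  have hmono : Monotone (a ∘ σ) := Tuple.monotone_sort a
  set b : ℕ → ℕ := fun i => if h : i < r then a (σ ⟨i, h⟩) else 0 with hb
  have hbσ (l : Fin r) : b l = (a ∘ σ) l := dif_pos l.isLt
  have hbVec : IsVec k r b := by
    refine ⟨fun i i' hii' hi' => ?_, ?_⟩
    · simp only [hb, hi', hii'.trans_lt hi', dif_pos]
      exact hmono (Fin.mk_le_mk.2 hii')
    · rw [← ha, ← Equiv.sum_comp σ, ← Fin.sum_univ_eq_sum_range b]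
      exact sum_congr rfl fun l _ => hbσ l
  calc vertexDensity k a j ≤ vertexDensity k a (σ ⟨0, hr⟩) :=
        vertexDensity_le_of_forall_le hk hmin _
    _ = gfun k r b := by
        rw [gfun_eq_vertexDensity hk hr, ← vertexDensity_comp_perm hk]
        simp only [hbσ]
    _ ≤ gThr k r := le_csSup (bddAbove_gfun hk hr) ⟨b, hbVec, rfl⟩

lemma gThr_le (hk : 1 ≤ k) (hr : 0 < r) {h : ℝ}
    (H : ∀ a : Fin r → ℕ, ∑ l, a l = k - 1 → ∀ j, (∀ l, a j ≤ a l) → vertexDensity k a j ≤ h) :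
    gThr k r ≤ h := by
  refine csSup_le ?_ ?_
  · refine ⟨_, fun i => if i = r - 1 then k - 1 else 0, ⟨fun i j hij hj => ?_, ?_⟩, rfl⟩
    · dsimp only
      split_ifs <;> omega
    · rw [sum_ite_eq', if_pos (mem_range.2 (by omega))]
  · rintro x ⟨a, ha, rfl⟩
    rw [gfun_eq_vertexDensity hk hr]
    refine H _ ?_ _ fun l => ha.1 0 l (Nat.zero_le _) l.isLt
    rw [Fin.sum_univ_eq_sum_range (fun i => a i), ha.2]

/-- The value of `gfun` at the vector `(0, …, 0, k - 1)`. -/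
lemma one_sub_pow_le_gThr (hk : 1 ≤ k) (hr : 2 ≤ r) :
    (1 - ((r : ℝ) - 1) / (r * k)) ^ (k - 1) ≤ gThr k r := by
  set j₀ : Fin r := ⟨0, by omega⟩
  set j₁ : Fin r := ⟨1, by omega⟩
  have hne : j₀ ≠ j₁ := by simp [j₀, j₁]
  set a : Fin r → ℕ := Pi.single j₁ (k - 1) with ha
  have h₀ : a j₀ = 0 := Pi.single_eq_of_ne hne _
  have h₁ : a j₁ = k - 1 := Pi.single_eq_same _ _
  have hle := vertexDensity_le_gThr hk (a := a) (by simp [ha]) (j := j₀) (by simp [h₀])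
  refine le_of_eq_of_le ?_ hle
  have hmono : dividedMonomial a (criticalPoint k a) =
      dividedPow (k - 1) (criticalPoint k a j₁) := by
    rw [← h₁]
    exact prod_eq_single j₁ (fun l _ hl => by simp [ha, hl, dividedPow]) (by simp)
  have hcrit : criticalPoint k a j₁ = 1 - ((r : ℝ) - 1) / (r * k) := by
    rw [criticalPoint, h₁, Nat.cast_pred hk]
    field_simp
    ring
  rw [vertexDensity_eq hk, h₀, hmono, hcrit, dividedPow]
  field_simp
  simp

end Threshold

section ExtremalConstruction

variable {V ι : Type*} [Fintype V] [Fintype ι] [DecidableEq ι] {k : ℕ}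

/-- All vertex sets with index vector `a + Pi.single i 1` for some `i`, which plays the role of the
colour of the edge. -/
def indexHypergraph (p : V → ι) (a : ι → ℕ) : Finset (Finset V) :=
  {e | ∃ i, indexVector p e = a + Pi.single i 1}

lemma mem_indexHypergraph {p : V → ι} {a : ι → ℕ} {e : Finset V} :
    e ∈ indexHypergraph p a ↔ ∃ i, indexVector p e = a + Pi.single i 1 := by
  simp [indexHypergraph]

lemma exists_coloring_indexHypergraph [Nonempty ι] (p : V → ι) (a : ι → ℕ) :
    ∃ c : Finset V → ι, ∀ e ∈ indexHypergraph p a, indexVector p e = a + Pi.single (c e) 1 := by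
  choose! c hc using fun e (he : e ∈ indexHypergraph p a) => mem_indexHypergraph.1 he
  exact ⟨c, hc⟩

lemma hyperUniform_indexHypergraph {p : V → ι} {a : ι → ℕ} (hk : 1 ≤ k)
    (ha : ∑ l, a l = k - 1) : HyperUniform k (indexHypergraph p a) := by
  intro e he
  obtain ⟨i, hi⟩ := mem_indexHypergraph.1 he
  rw [← sum_indexVector p e, hi]
  simp only [Pi.add_apply, sum_add_distrib, ha, sum_pi_single', mem_univ, if_true]
  omega

variable [DecidableEq V]

lemma link_indexHypergraph (p : V → ι) (a : ι → ℕ) (v : V) :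
    link (indexHypergraph p a) v =
      {T ∈ (univ.erase v).powerset | indexVector p T ∈ linkVectors a (p v)} := by
  ext T
  simp only [mem_link, mem_indexHypergraph, mem_filter, mem_powerset, subset_erase, subset_univ,
    true_and, mem_linkVectors]
  exact and_congr_right fun hv => by rw [indexVector_insert p hv]

lemma linkDensity_le_hdeg_indexHypergraph {p : V → ι} {a : ι → ℕ} (hk : 1 ≤ k)
    (ha : ∑ l, a l = k - 1) {y : ι → ℝ} (hy : ∀ l, 0 ≤ y l)
    (hp : ∀ l, y l + k ≤ indexVector p univ l) (v : V) :
    linkDensity a (p v) y ≤ hdeg (indexHypergraph p a) v := by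
  rw [← card_link, link_indexHypergraph]
  refine le_card_filter_indexVector_mem p _ _ hy fun s hs l => ?_
  have hsl : s l + 1 ≤ k := by
    have := single_le_sum (f := s) (fun _ _ => Nat.zero_le _) (mem_univ l)
    rw [sum_eq_of_mem_linkVectors hs, ha] at this
    omega
  have herase : indexVector p univ l ≤ indexVector p (univ.erase v) l + 1 := by
    conv_lhs => rw [← insert_erase (mem_univ v), indexVector_insert p (notMem_erase v univ)]
    simp only [Pi.add_apply, Pi.single_apply]
    split_ifs <;> omega
  have hsl' : (s l : ℝ) + 1 ≤ k := by exact_mod_cast hsl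
  have herase' : (indexVector p univ l : ℝ) ≤ indexVector p (univ.erase v) l + 1 := by
    exact_mod_cast herase
  linarith [hp l]

lemma linkDensity_mul_choose_le_hdeg_indexHypergraph {p : V → ι} {a : ι → ℕ} (hk : 1 ≤ k)
    (ha : ∑ l, a l = k - 1) {x : ι → ℝ} (hx : ∀ l, 0 ≤ x l) {n : ℕ}
    (hp : ∀ l, n * x l + k ≤ indexVector p univ l) (v : V) :
    (k - 1).factorial * linkDensity a (p v) x * ((n - 1).choose (k - 1) : ℝ) ≤
      hdeg (indexHypergraph p a) v :=
  calc (k - 1).factorial * linkDensity a (p v) x * ((n - 1).choose (k - 1) : ℝ)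
      = (k - 1).factorial * (n - 1).choose (k - 1) * linkDensity a (p v) x := by ring
    _ ≤ n ^ (k - 1) * linkDensity a (p v) x := by
        gcongr
        · exact linkDensity_nonneg a _ hx
        · exact factorial_mul_choose_pred_le_pow _ _
    _ = linkDensity a (p v) fun l => n * x l := by rw [linkDensity_mul, ha]
    _ ≤ _ := linkDensity_le_hdeg_indexHypergraph hk ha (fun l => by have := hx l; positivity) hp v

end ExtremalConstruction

section ColorCount

variable {V ι : Type*} [DecidableEq V] [DecidableEq ι] {H M : Finset (Finset V)} {U : Finset V}

lemma IsPerfectMatchingOn.indexVector_eq_add_card (hM : IsPerfectMatchingOn H M U) {p : V → ι}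
    {a : ι → ℕ} {c : Finset V → ι} (hc : ∀ e ∈ M, indexVector p e = a + Pi.single (c e) 1) (i : ι) :
    indexVector p U i = #M * a i + #{e ∈ M | c e = i} := by
  rw [hM.indexVector_eq p i, sum_congr rfl fun e he => congrFun (hc e he) i]
  simp only [Pi.add_apply, Pi.single_apply, sum_add_distrib, sum_const, smul_eq_mul, card_filter,
    eq_comm]

end ColorCount

section DiscrepancyLowerBound

open Filter

variable {r k : ℕ}

lemma eventually_forall_lt_linkDensity {ι : Type*} [Fintype ι] [DecidableEq ι] (a : ι → ℕ)
    {x : ι → ℝ} {b C : ℝ} (hb : ∀ j, b < C * linkDensity a j x) (t : ℝ) :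
    ∀ᶠ m : ℕ in atTop, ∀ j, b < C * linkDensity a j fun l => x l - t / m := by
  refine eventually_all.2 fun j => ?_
  have hlim : Tendsto (fun (m : ℕ) l => x l - t / m) atTop (nhds x) := by
    refine tendsto_pi_nhds.2 fun l => ?_
    simpa using (tendsto_const_div_atTop_nhds_zero_nat t).const_sub (x l)
  exact ((((continuous_linkDensity a j).tendsto x).comp hlim).const_mul C).eventually_const_lt
    (hb j)

lemma sum_mul_add_one_eq (hk : 1 ≤ k) {a : Fin r → ℕ} (ha : ∑ l, a l = k - 1) :
    ∑ l, (r * a l + 1) = r * k := by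
  rw [sum_add_distrib, ← mul_sum, ha, sum_const, card_univ, Fintype.card_fin, smul_eq_mul,
    ← mul_add, Nat.sub_add_cancel hk]

lemma exists_equitable_coloring (hk : 1 ≤ k) {a : Fin r → ℕ} (ha : ∑ l, a l = k - 1) {h : ℝ}
    (hlt : ∀ j, h < vertexDensity k a j) (hr : 0 < r) (n₀ : ℕ) :
    ∃ n, n₀ ≤ n ∧ 0 < n ∧ k ∣ n ∧ ∃ H : Finset (Finset (Fin n)), HyperUniform k H ∧
      (∀ v, h * ((n - 1).choose (k - 1) : ℝ) ≤ hdeg H v) ∧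
      ∃ c : Finset (Fin n) → Fin r, ∀ M, IsPM H M → ∀ i, n = #{e ∈ M | c e = i} * (r * k) := by
  obtain ⟨m, hdensity, hm⟩ := ((eventually_forall_lt_linkDensity a hlt (1 / r)).and
    (eventually_ge_atTop (n₀ + k))).exists
  have hm0 : 0 < m := by omega
  set n := r * k * m with hn
  have hmn : m ≤ n := Nat.le_mul_of_pos_left m (Nat.mul_pos hr hk)
  obtain ⟨p, hp⟩ := exists_indexVector_univ_eq (V := Fin n) (fun l => (r * a l + 1) * m)
    (by rw [← sum_mul, sum_mul_add_one_eq hk ha, Fintype.card_fin])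
  have hsize (l) : n * (criticalPoint k a l - 1 / r / m) + k = indexVector p univ l := by
    rw [hp, criticalPoint, hn]
    push_cast
    field_simp
    ring
  have hx (l) : 0 ≤ criticalPoint k a l - 1 / r / m := by
    have hkm : (k : ℝ) ≤ m := by exact_mod_cast (by omega : k ≤ m)
    rw [sub_nonneg, criticalPoint, div_div]
    gcongr
    exact le_add_of_nonneg_left (by positivity)
  have hH := hyperUniform_indexHypergraph (p := p) hk ha
  have : Nonempty (Fin r) := ⟨⟨0, hr⟩⟩
  obtain ⟨c, hc⟩ := exists_coloring_indexHypergraph p a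
  refine ⟨n, by omega, hm0.trans_le hmn, ⟨r * m, by rw [hn]; ring⟩, indexHypergraph p a, hH,
    fun v => ?_, c, fun M hM i => ?_⟩
  · exact (mul_le_mul_of_nonneg_right (hdensity (p v)).le (Nat.cast_nonneg _)).trans
      (linkDensity_mul_choose_le_hdeg_indexHypergraph hk ha hx (fun l => (hsize l).le) v)
  · rw [isPM_iff_isPerfectMatchingOn_univ] at hM
    have hMcard : #M = r * m := by
      have hcard := hM.card_eq hH
      rw [card_univ, Fintype.card_fin] at hcard
      exact Nat.eq_of_mul_eq_mul_right hk (hcard.symm.trans (hn.trans (by ring)))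
    have hcount := hM.indexVector_eq_add_card (fun e he => hc e (hM.subset he)) i
    rw [hp, hMcard] at hcount
    rw [show #{e ∈ M | c e = i} = m by linarith]
    exact hn.trans (mul_comm _ _)

lemma vertexDensity_le_of_discProp (hk : 1 ≤ k) {h : ℝ} (hD : DiscProp k r h)
    {a : Fin r → ℕ} (ha : ∑ l, a l = k - 1) {j₀ : Fin r} (hmin : ∀ l, a j₀ ≤ a l) :
    vertexDensity k a j₀ ≤ h := by
  by_contra! hlt
  have hr : 0 < r := j₀.pos
  obtain ⟨h', hh', hlt⟩ := exists_between hlt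
  obtain ⟨δ, hδ, n₀, hn₀⟩ := hD (h' - h) (sub_pos.2 hh')
  rw [add_sub_cancel] at hn₀
  obtain ⟨n, hn, hn0, hkn, H, hH, hdeg, c, hc⟩ := exists_equitable_coloring hk ha
    (fun j => hlt.trans_le (vertexDensity_le_of_forall_le hk hmin j)) hr n₀
  obtain ⟨M, hM, i, hi⟩ := hn₀ n hn hkn H hH hdeg c
  have hcount : (n : ℝ) = #{e ∈ M | c e = i} * (r * k) := by exact_mod_cast hc M hM i
  have hratio : (n : ℝ) / (r * k) = #{e ∈ M | c e = i} := by
    rw [div_eq_iff (by positivity), ← hcount]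
  have hδn : 0 < δ * n := by positivity
  linarith

end DiscrepancyLowerBound

section Switching

variable {V ι G : Type*} [DecidableEq V] [Fintype ι] [AddCommGroup G] {k m : ℕ}
  {H E F : Finset (Finset V)} {U X Y : Finset V} {u v : ι → V} {T : ι → Finset V}

/-- Any two perfect matchings of `H` on a common vertex set which consist of at most `m` edges
have the same total `φ`-value. -/
def MatchingInvariant (H : Finset (Finset V)) (m : ℕ) (φ : Finset V → G) : Prop :=
  ∀ ⦃M N : Finset (Finset V)⦄ ⦃W : Finset V⦄, IsPerfectMatchingOn H M W →
    IsPerfectMatchingOn H N W → #M ≤ m → ∑ e ∈ M, φ e = ∑ e ∈ N, φ e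

/-- Any two vertices of `U` have a common member of their links that avoids any prescribed set of
at most `m` vertices. -/
def HasCommonLinks (H : Finset (Finset V)) (U : Finset V) (m : ℕ) : Prop :=
  ∀ u ∈ U, ∀ v ∈ U, ∀ X : Finset V, #X ≤ m → ∃ T ∈ link H u ∩ link H v, Disjoint T X

omit [Fintype ι] in
lemma insert_injective_of_notMem (hu : Function.Injective u) (huT : ∀ i j, u i ∉ T j) :
    Function.Injective fun i => insert (u i) (T i) := by
  intro i j hij
  have hmem : u i ∈ insert (u j) (T j) := (Finset.ext_iff.1 hij _).1 (mem_insert_self _ _)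
  exact hu ((mem_insert.1 hmem).resolve_right (huT i j))

lemma isPerfectMatchingOn_image_insert (hu : Function.Injective u) (huT : ∀ i j, u i ∉ T j)
    (hT : ∀ i, T i ∈ link H (u i)) (hdisj : Pairwise (Function.onFun Disjoint T)) :
    IsPerfectMatchingOn H (univ.image fun i => insert (u i) (T i))
      (univ.image u ∪ univ.biUnion T) where
  subset := image_subset_iff.2 fun i _ => (mem_link.1 (hT i)).2
  pairwiseDisjoint := by
    rw [coe_image]
    rintro _ ⟨i, -, rfl⟩ _ ⟨j, -, rfl⟩ hne
    have hij : j ≠ i := fun h => hne (by rw [h])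
    simp only [Function.onFun, id, disjoint_insert_left, disjoint_insert_right, mem_insert, not_or]
    exact ⟨⟨hu.ne hij, huT j i⟩, huT i j, hdisj hij.symm⟩
  biUnion_eq := by
    ext x
    simp only [mem_biUnion, mem_image, mem_union, mem_univ, true_and, exists_exists_eq_and,
      id, mem_insert, ← exists_or, eq_comm (a := x)]

lemma sum_union_image_insert (hE : IsPerfectMatchingOn H E X) (hX : Disjoint X (univ.image u))
    (hu : Function.Injective u) (huT : ∀ i j, u i ∉ T j) (φ : Finset V → G) :
    ∑ e ∈ E ∪ univ.image fun i => insert (u i) (T i), φ e =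
      ∑ e ∈ E, φ e + ∑ i, φ (insert (u i) (T i)) := by
  have hdisj : Disjoint E (univ.image fun i => insert (u i) (T i)) := by
    refine disjoint_right.2 fun e he heE => ?_
    obtain ⟨i, -, rfl⟩ := mem_image.1 he
    exact disjoint_right.1 hX (mem_image_of_mem u (mem_univ i))
      (hE.edge_subset heE (mem_insert_self _ _))
  rw [sum_union hdisj, sum_image fun i _ j _ h => insert_injective_of_notMem hu huT h]

lemma MatchingInvariant.sum_add_sum_insert_eq {φ : Finset V → G} (h : MatchingInvariant H m φ)
    (hm : #E + Fintype.card ι ≤ m) (hE : IsPerfectMatchingOn H E X)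
    (hF : IsPerfectMatchingOn H F Y) (hu : Function.Injective u) (hv : Function.Injective v)
    (huT : ∀ i j, u i ∉ T j) (hvT : ∀ i j, v i ∉ T j)
    (hT : ∀ i, T i ∈ link H (u i) ∩ link H (v i)) (hdisj : Pairwise (Function.onFun Disjoint T))
    (hX : Disjoint X (univ.image u ∪ univ.biUnion T))
    (hY : Disjoint Y (univ.image v ∪ univ.biUnion T)) (hXY : X ∪ univ.image u = Y ∪ univ.image v) :
    ∑ e ∈ E, φ e + ∑ i, φ (insert (u i) (T i)) =
      ∑ e ∈ F, φ e + ∑ i, φ (insert (v i) (T i)) := by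
  have hM := hE.union
    (isPerfectMatchingOn_image_insert hu huT (fun i => (mem_inter.1 (hT i)).1) hdisj) hX
  have hN := hF.union
    (isPerfectMatchingOn_image_insert hv hvT (fun i => (mem_inter.1 (hT i)).2) hdisj) hY
  rw [← union_assoc, ← hXY, union_assoc] at hN
  have hcard : #(E ∪ univ.image fun i => insert (u i) (T i)) ≤ m :=
    (card_union_le _ _).trans ((Nat.add_le_add_left card_image_le _).trans hm)
  rw [← sum_union_image_insert hE (disjoint_union_right.1 hX).1 hu huT,
    ← sum_union_image_insert hF (disjoint_union_right.1 hY).1 hv hvT]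
  exact h hM hN hcard

lemma MatchingInvariant.sum_sub_comp_perm_eq_zero {φ : Finset V → G} (h : MatchingInvariant H m φ)
    (hm : Fintype.card ι ≤ m) (τ : Equiv.Perm ι) (hu : Function.Injective u)
    (huT : ∀ i j, u i ∉ T j) (hT : ∀ i, T i ∈ link H (u i) ∩ link H (u (τ i)))
    (hdisj : Pairwise (Function.onFun Disjoint T)) :
    ∑ i, (φ (insert (u i) (T i)) - φ (insert (u (τ i)) (T i))) = 0 := by
  classical
  have hempty : IsPerfectMatchingOn H ∅ ∅ := ⟨empty_subset H, by simp, by simp⟩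
  rw [sum_sub_distrib, sub_eq_zero]
  simpa using h.sum_add_sum_insert_eq (v := u ∘ τ) (by simpa using hm) hempty hempty hu
    (hu.comp τ.injective) huT (fun i => huT (τ i)) hT hdisj (disjoint_empty_left _)
    (disjoint_empty_left _) (by
      rw [← image_image, image_univ_equiv])

lemma HasCommonLinks.exists_pairwise_disjoint (hU : HasCommonLinks H U m) (hH : HyperUniform k H)
    (hu : ∀ i, u i ∈ U) (hv : ∀ i, v i ∈ U) (hX : #X + Fintype.card ι * (k - 1) ≤ m) :
    ∃ T : ι → Finset V, (∀ i, T i ∈ link H (u i) ∩ link H (v i)) ∧ (∀ i, Disjoint (T i) X) ∧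
      Pairwise (Function.onFun Disjoint T) := by
  classical
  suffices hgreedy : ∀ s : Finset ι, ∃ T : ι → Finset V,
      (∀ i ∈ s, T i ∈ link H (u i) ∩ link H (v i) ∧ Disjoint (T i) X) ∧
        (s : Set ι).PairwiseDisjoint T by
    obtain ⟨T, hT, hdisj⟩ := hgreedy univ
    exact ⟨T, fun i => (hT i (mem_univ i)).1, fun i => (hT i (mem_univ i)).2, fun i j hij =>
      hdisj (mem_coe.2 (mem_univ i)) (mem_coe.2 (mem_univ j)) hij⟩
  intro s
  induction s using Finset.induction_on with
  | empty => exact ⟨fun _ => ∅, by simp, by simp⟩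
  | insert i s hi ih =>
    obtain ⟨T, hT, hdisj⟩ := ih
    have hcard : #(X ∪ s.biUnion T) ≤ m := by
      have hs : #(s.biUnion T) ≤ #s * (k - 1) := card_biUnion_le_card_mul _ _ _ fun j hj =>
        (card_of_mem_link hH (mem_inter.1 (hT j hj).1).1).le
      exact (card_union_le _ _).trans (((Nat.add_le_add_left
        (hs.trans (Nat.mul_le_mul_right _ (card_le_univ s)))) _).trans hX)
    obtain ⟨R, hR, hRX⟩ := hU (u i) (hu i) (v i) (hv i) _ hcard
    rw [disjoint_union_right, disjoint_biUnion_right] at hRX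
    have hupdate : ∀ j ∈ s, Function.update T i R j = T j := fun j hj =>
      Function.update_of_ne (ne_of_mem_of_not_mem hj hi) _ _
    refine ⟨Function.update T i R, fun j hj => ?_, ?_⟩
    · obtain rfl | hj := mem_insert.1 hj
      · simpa using ⟨mem_inter.1 hR, hRX.1⟩
      · simpa only [hupdate j hj] using hT j hj
    · rw [coe_insert, Set.pairwiseDisjoint_insert_of_notMem (mem_coe.not.2 hi)]
      refine ⟨fun j hj l hl hjl => ?_, fun j hj => ?_⟩
      · simpa only [Function.onFun, hupdate j hj, hupdate l hl] using hdisj hj hl hjl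
      · simpa only [Function.update_self, hupdate j hj] using hRX.2 j hj

end Switching

section VertexWeight

variable {V G : Type*} [DecidableEq V] [AddCommGroup G] {k : ℕ} {H : Finset (Finset V)}
  {U : Finset V} {φ : Finset V → G}

lemma MatchingInvariant.sub_eq_sub_of_disjoint (h : MatchingInvariant H (k + 1) φ) (hk : 1 ≤ k)
    {u v : V} {S T : Finset V} (hS : S ∈ link H u ∩ link H v) (hT : T ∈ link H u ∩ link H v)
    (hST : Disjoint S T) :
    φ (insert u S) - φ (insert v S) = φ (insert u T) - φ (insert v T) := by
  obtain rfl | huv := eq_or_ne u v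
  · simp
  rw [mem_inter, mem_link, mem_link] at hS hT
  have hswap := h.sum_sub_comp_perm_eq_zero (u := ![u, v]) (T := ![S, T])
    (by simpa using hk) (Equiv.swap 0 1)
    (by intro i j hij; fin_cases i <;> fin_cases j <;> simp_all)
    (by simp [Fin.forall_fin_two, hS.1.1, hS.2.1, hT.1.1, hT.2.1])
    (by simp [Fin.forall_fin_two, mem_link, hS, hT])
    (by intro i j hij; fin_cases i <;> fin_cases j <;> simp_all [Function.onFun, disjoint_comm])
  rw [sub_eq_sub_iff_add_eq_add, ← sub_eq_zero]
  simpa [Fin.sum_univ_two, add_comm] using hswap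

lemma MatchingInvariant.sub_eq_sub (h : MatchingInvariant H (k + 1) φ) (hk : 1 ≤ k)
    (hH : HyperUniform k H) (hU : HasCommonLinks H U (k * (k + 1))) {u v : V} (hu : u ∈ U)
    (hv : v ∈ U) {S T : Finset V} (hS : S ∈ link H u ∩ link H v) (hT : T ∈ link H u ∩ link H v) :
    φ (insert u S) - φ (insert v S) = φ (insert u T) - φ (insert v T) := by
  have hcard : #(S ∪ T) ≤ k * (k + 1) := by
    have hST := card_union_le S T
    rw [card_of_mem_link hH (mem_inter.1 hS).1, card_of_mem_link hH (mem_inter.1 hT).1] at hST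
    have : k + 1 ≤ k * (k + 1) := Nat.le_mul_of_pos_left _ hk
    have : k * 2 ≤ k * (k + 1) := Nat.mul_le_mul_left k (by omega)
    omega
  obtain ⟨R, hR, hdisj⟩ := hU u hu v hv (S ∪ T) hcard
  rw [disjoint_union_right] at hdisj
  rw [← h.sub_eq_sub_of_disjoint hk hR hS hdisj.1, h.sub_eq_sub_of_disjoint hk hR hT hdisj.2]

lemma MatchingInvariant.sub_add_sub_eq_sub (h : MatchingInvariant H (k + 1) φ) (hk : 2 ≤ k)
    (hH : HyperUniform k H) (hU : HasCommonLinks H U (k * (k + 1))) {u v w : V} (hu : u ∈ U)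
    (hv : v ∈ U) (hw : w ∈ U) {R S T : Finset V} (hR : R ∈ link H u ∩ link H v)
    (hS : S ∈ link H v ∩ link H w) (hT : T ∈ link H u ∩ link H w) :
    (φ (insert u R) - φ (insert v R)) + (φ (insert v S) - φ (insert w S)) =
      φ (insert u T) - φ (insert w T) := by
  have hindep := fun {u v} (hu : u ∈ U) (hv : v ∈ U) {S} (hS : S ∈ link H u ∩ link H v) {T}
    (hT : T ∈ link H u ∩ link H v) => h.sub_eq_sub (by omega) hH hU hu hv hS hT
  obtain rfl | huv := eq_or_ne u v
  · rw [sub_self, zero_add, hindep hu hw hS hT]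
  obtain rfl | hvw := eq_or_ne v w
  · rw [sub_self, add_zero, hindep hu hv hR hT]
  obtain rfl | huw := eq_or_ne u w
  · rw [hindep hu hv hR (inter_comm (link H u) _ ▸ hS)]
    abel
  obtain ⟨Q, hQ, hdisj, hQdisj⟩ := hU.exists_pairwise_disjoint (u := ![u, v, w])
    (v := ![v, w, u]) (X := {u, v, w}) hH (by simp [Fin.forall_fin_succ, *])
    (by simp [Fin.forall_fin_succ, *]) (by
      have : #{u, v, w} ≤ 3 := card_le_three
      have : 3 * k ≤ k * (k + 1) := by rw [mul_comm]; gcongr; omega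
      simp only [Fintype.card_fin]
      omega)
  have hcycle := h.sum_sub_comp_perm_eq_zero (u := ![u, v, w]) (T := Q) (by simpa using hk)
    (Equiv.addRight 1) (by intro i j hij; fin_cases i <;> fin_cases j <;> simp_all)
    (fun i j => by have := hdisj j; fin_cases i <;> simp_all)
    (fun i => by have := hQ i; fin_cases i <;> simpa using this) hQdisj
  have huw_eq := hindep hw hu (hQ 2) (inter_comm (link H u) _ ▸ hT)
  rw [hindep hu hv hR (hQ 0), hindep hv hw hS (hQ 1),
    ← neg_sub (φ (insert w T)), ← huw_eq, eq_neg_iff_add_eq_zero]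
  rw [Fin.sum_univ_three] at hcycle
  exact hcycle

lemma MatchingInvariant.exists_vertexWeight (h : MatchingInvariant H (k + 1) φ) (hk : 2 ≤ k)
    (hH : HyperUniform k H) (hU : HasCommonLinks H U (k * (k + 1))) :
    ∃ w : V → G, ∀ u ∈ U, ∀ v ∈ U, ∀ T ∈ link H u ∩ link H v,
      φ (insert u T) - φ (insert v T) = w u - w v := by
  obtain rfl | ⟨o, ho⟩ := U.eq_empty_or_nonempty
  · exact ⟨0, by simp⟩
  choose! S hS using fun u hu => hU u hu o ho ∅ (by simp)
  refine ⟨fun u => φ (insert u (S u)) - φ (insert o (S u)), fun u hu v hv T hT => ?_⟩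
  rw [eq_sub_iff_add_eq]
  exact h.sub_add_sub_eq_sub hk hH hU hu hv ho hT (hS v hv).1 (hS u hu).1

lemma MatchingInvariant.add_sum_insert_eq_of_disjoint (h : MatchingInvariant H (k + 1) φ)
    (hH : HyperUniform k H) {e f : Finset V} (he : e ∈ H) (hf : f ∈ H) (hef : Disjoint e f)
    (τ : e ≃ f) {T : e → Finset V} (hT : ∀ x : e, T x ∈ link H (τ x : V) ∩ link H (x : V))
    (hTe : ∀ x, Disjoint (T x) e) (hTf : ∀ x, Disjoint (T x) f)
    (hdisj : Pairwise (Function.onFun Disjoint T)) :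
    φ e + ∑ x : e, φ (insert (τ x : V) (T x)) =
      φ f + ∑ x : e, φ (insert (x : V) (T x)) := by
  have himage_e : univ.image (fun x : e => (x : V)) = e := by simp
  have himage_f : univ.image (fun x : e => (τ x : V)) = f := by
    ext x
    simp only [mem_image, mem_univ, true_and]
    exact ⟨by rintro ⟨y, rfl⟩; exact (τ y).2, fun hx => ⟨τ.symm ⟨x, hx⟩, by simp⟩⟩
  have hswitch := h.sum_add_sum_insert_eq (E := {e}) (F := {f}) (X := e) (Y := f)
    (by simp [hH e he, add_comm]) ⟨by simpa, by simp, by simp⟩ ⟨by simpa, by simp, by simp⟩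
    (Subtype.val_injective.comp τ.injective) Subtype.val_injective
    (fun i j => disjoint_right.1 (hTf j) (τ i).2) (fun i j => disjoint_right.1 (hTe j) i.2) hT hdisj
    (by
      simp only [Function.comp_def, himage_f, disjoint_union_right, disjoint_biUnion_right]
      exact ⟨hef, fun i _ => (hTe i).symm⟩)
    (by
      rw [himage_e, disjoint_union_right, disjoint_biUnion_right]
      exact ⟨hef.symm, fun i _ => (hTf i).symm⟩)
    (by simp only [Function.comp_def, himage_e, himage_f, union_comm])
  simpa only [sum_singleton, Function.comp_apply] using hswitch

lemma MatchingInvariant.sub_sum_eq_of_disjoint (h : MatchingInvariant H (k + 1) φ)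
    (hH : HyperUniform k H) (hHU : ∀ e ∈ H, e ⊆ U) (hU : HasCommonLinks H U (k * (k + 1)))
    {w : V → G} (hw : ∀ u ∈ U, ∀ v ∈ U, ∀ T ∈ link H u ∩ link H v,
      φ (insert u T) - φ (insert v T) = w u - w v)
    {e f : Finset V} (he : e ∈ H) (hf : f ∈ H) (hef : Disjoint e f) :
    φ e - ∑ u ∈ e, w u = φ f - ∑ u ∈ f, w u := by
  obtain ⟨τ⟩ : Nonempty (e ≃ f) := ⟨Finset.equivOfCardEq ((hH e he).trans (hH f hf).symm)⟩
  have heU : ∀ x : e, (x : V) ∈ U := fun x => hHU e he x.2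
  have hfU : ∀ x : e, (τ x : V) ∈ U := fun x => hHU f hf (τ x).2
  obtain ⟨T, hT, hTX, hdisj⟩ := hU.exists_pairwise_disjoint (X := e ∪ f) hH hfU heU (by
    rw [card_union_of_disjoint hef, Fintype.card_coe, hH e he, hH f hf]
    obtain ⟨⟩ | k := k
    · simp
    · exact Nat.le_of_eq (by rw [Nat.add_sub_cancel]; ring))
  simp only [disjoint_union_right] at hTX
  have hswitch := h.add_sum_insert_eq_of_disjoint hH he hf hef τ hT (fun x => (hTX x).1)
    (fun x => (hTX x).2) hdisj
  have hsum : ∑ x : e, φ (insert (τ x : V) (T x)) - ∑ x : e, φ (insert (x : V) (T x)) =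
      ∑ u ∈ f, w u - ∑ u ∈ e, w u := by
    rw [← sum_sub_distrib, sum_congr rfl fun x _ => hw _ (hfU x) _ (heU x) _ (hT x),
      sum_sub_distrib, sum_coe_sort e, τ.sum_comp fun y : f => w y, sum_coe_sort f]
  rw [sub_eq_sub_iff_sub_eq_sub, ← neg_inj, neg_sub, neg_sub, ← hsum, sub_eq_sub_iff_add_eq_add,
    ← hswitch, add_comm]

lemma HasCommonLinks.exists_mem_disjoint {m : ℕ} (hk : 2 ≤ k) (hH : HyperUniform k H)
    (hHU : ∀ e ∈ H, e ⊆ U) (hU : HasCommonLinks H U m) {v : V} (hv : v ∈ U) {X : Finset V}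
    (hX : #X ≤ m) : ∃ e ∈ H, Disjoint e X := by
  obtain ⟨T, hT, hTX⟩ := hU v hv v hv X hX
  rw [inter_self] at hT
  obtain ⟨t, ht⟩ : T.Nonempty := by
    rw [← card_pos, card_of_mem_link hH hT]
    omega
  have htU : t ∈ U := hHU _ (mem_link.1 hT).2 (mem_insert_of_mem ht)
  obtain ⟨S, hS, hSX⟩ := hU t htU t htU X hX
  rw [inter_self] at hS
  exact ⟨insert t S, (mem_link.1 hS).2,
    disjoint_insert_left.2 ⟨disjoint_left.1 hTX ht, hSX⟩⟩

lemma MatchingInvariant.exists_eq_add_sum (h : MatchingInvariant H (k + 1) φ) (hk : 2 ≤ k)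
    (hH : HyperUniform k H) (hHU : ∀ e ∈ H, e ⊆ U) (hU : HasCommonLinks H U (k * (k + 1))) :
    ∃ (q : G) (w : V → G), (∀ u ∈ U, ∀ v ∈ U, ∃ e ∈ H, ∃ f ∈ H, w u - w v = φ e - φ f) ∧
      ∀ e ∈ H, φ e = q + ∑ u ∈ e, w u := by
  obtain ⟨w, hw⟩ := h.exists_vertexWeight hk hH hU
  have hwφ : ∀ u ∈ U, ∀ v ∈ U, ∃ e ∈ H, ∃ f ∈ H, w u - w v = φ e - φ f := by
    intro u hu v hv
    obtain ⟨T, hT, -⟩ := hU u hu v hv ∅ (by simp)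
    exact ⟨_, (mem_link.1 (mem_inter.1 hT).1).2, _, (mem_link.1 (mem_inter.1 hT).2).2,
      (hw u hu v hv T hT).symm⟩
  obtain rfl | ⟨f, hf⟩ := H.eq_empty_or_nonempty
  · exact ⟨0, w, hwφ, by simp⟩
  refine ⟨φ f - ∑ u ∈ f, w u, w, hwφ, fun e he => ?_⟩
  have hcard : #(e ∪ f) ≤ k * (k + 1) := by
    have hle := card_union_le e f
    rw [hH e he, hH f hf] at hle
    exact hle.trans (by rw [← mul_two]; gcongr; omega)
  obtain ⟨v, hv⟩ : f.Nonempty := card_pos.1 (by rw [hH f hf]; omega)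
  obtain ⟨g, hg, hdisj⟩ := hU.exists_mem_disjoint hk hH hHU (hHU f hf hv) hcard
  rw [disjoint_union_right] at hdisj
  rw [← sub_eq_iff_eq_add, ← h.sub_sum_eq_of_disjoint hH hHU hU hw hg he hdisj.1,
    h.sub_sum_eq_of_disjoint hH hHU hU hw hg hf hdisj.2]

end VertexWeight

section RootDifference

variable {V ι : Type*} [DecidableEq ι]

lemma eq_or_eq_of_single_sub_single {a b a' b' c d : ι} (hab : a ≠ b) (hab' : a' ≠ b')
    (h : (Pi.single a 1 - Pi.single b 1 - (Pi.single a' 1 - Pi.single b' 1) : ι → ℤ) =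
      Pi.single c 1 - Pi.single d 1) : a = a' ∨ b = b' := by
  by_contra! hne
  have ha := congrFun h a
  have hb' := congrFun h b'
  simp only [Pi.sub_apply, Pi.single_apply] at ha hb'
  grind

lemma exists_forall_eq_or_forall_eq {α β : Type*} [Nonempty β] {s : Set α} {f g : α → β}
    (h : ∀ x ∈ s, ∀ y ∈ s, f x = f y ∨ g x = g y) :
    ∃ b, (∀ x ∈ s, f x = b) ∨ ∀ x ∈ s, g x = b := by
  by_cases hf : ∀ x ∈ s, ∀ y ∈ s, f x = f y
  · obtain rfl | ⟨x, hx⟩ := s.eq_empty_or_nonempty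
    · simp
    · exact ⟨f x, Or.inl fun y hy => hf y hy x hx⟩
  · push Not at hf
    obtain ⟨x, hx, y, hy, hxy⟩ := hf
    refine ⟨g x, Or.inr fun z hz => ?_⟩
    grind

lemma exists_eq_add_single [Nonempty ι] {U : Set V} {w : V → ι → ℤ}
    (hw : ∀ u ∈ U, ∀ v ∈ U, ∃ i j, w u - w v = Pi.single i 1 - Pi.single j 1) :
    ∃ (σ : ℤˣ) (p : V → ι) (b : ι → ℤ), ∀ u ∈ U, w u = b + Pi.single (p u) (σ : ℤ) := by
  classical
  obtain rfl | ⟨o, ho⟩ := U.eq_empty_or_nonempty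
  · exact ⟨1, fun _ => Classical.arbitrary ι, 0, by simp⟩
  choose! f g hfg using fun u hu => hw u hu o ho
  have hne : ∀ u ∈ {u ∈ U | w u ≠ w o}, f u ≠ g u := fun u hu heq =>
    hu.2 (by rw [← sub_eq_zero, hfg u hu.1, heq, sub_self])
  obtain ⟨i, hf | hg⟩ := exists_forall_eq_or_forall_eq (s := {u ∈ U | w u ≠ w o}) (f := f) (g := g)
    (fun u hu v hv => by
      obtain ⟨c, d, hcd⟩ := hw u hu.1 v hv.1
      refine eq_or_eq_of_single_sub_single (hne u hu) (hne v hv) (c := c) (d := d) ?_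
      rw [← hfg u hu.1, ← hfg v hv.1, sub_sub_sub_cancel_right, hcd])
  · refine ⟨-1, fun u => if w u = w o then i else g u, w o + Pi.single i 1, fun u hu => ?_⟩
    dsimp only
    split_ifs with huo
    · simp [huo, Pi.single_neg]
    · rw [sub_eq_iff_eq_add.1 (hfg u hu), hf u ⟨hu, huo⟩, Units.val_neg, Units.val_one,
        Pi.single_neg]
      abel
  · refine ⟨1, fun u => if w u = w o then i else f u, w o - Pi.single i 1, fun u hu => ?_⟩
    dsimp only
    split_ifs with huo
    · simp [huo]
    · rw [sub_eq_iff_eq_add.1 (hfg u hu), hg u ⟨hu, huo⟩, Units.val_one]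
      abel

end RootDifference

section IndexColoring

variable {V ι : Type*} [DecidableEq V] [DecidableEq ι] {k : ℕ} {H : Finset (Finset V)}
  {U : Finset V} {c : Finset V → ι}

/-- The standard unit vector of the colour of `e`; its sums over matchings count the edges of each
colour. -/
def colorVector (c : Finset V → ι) (e : Finset V) : ι → ℤ := Pi.single (c e) 1

/-- The colour of each edge of `H` is determined by its index vector with respect to the partition
`p`, which exceeds (`σ = 1`) or falls short of (`σ = -1`) the fixed vector `a` by one in exactly
the entry given by the colour. -/
def IsIndexColoring (σ : ℤˣ) (p : V → ι) (a : ι → ℤ) (c : Finset V → ι)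
    (H : Finset (Finset V)) : Prop :=
  ∀ e ∈ H, (fun i => (indexVector p e i : ℤ)) = a + Pi.single (c e) (σ : ℤ)

omit [DecidableEq V] in
lemma sum_single_eq_mul_indexVector (σ : ℤ) (p : V → ι) (e : Finset V) (i : ι) :
    (∑ u ∈ e, Pi.single (M := fun _ => ℤ) (p u) σ) i = σ * indexVector p e i := by
  simp only [Finset.sum_apply, Pi.single_apply, indexVector, ← sum_boole, mul_sum, mul_boole,
    eq_comm (a := i)]

lemma exists_isIndexColoring [Nonempty ι] (hk : 2 ≤ k) (hH : HyperUniform k H)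
    (hHU : ∀ e ∈ H, e ⊆ U) (hU : HasCommonLinks H U (k * (k + 1)))
    (h : MatchingInvariant H (k + 1) (colorVector c)) :
    ∃ (σ : ℤˣ) (p : V → ι) (a : ι → ℤ), IsIndexColoring σ p a c H := by
  obtain ⟨q, w, hw, hqw⟩ := h.exists_eq_add_sum hk hH hHU hU
  obtain ⟨σ, p, b, hb⟩ := exists_eq_add_single (U := U) (w := w) fun u hu v hv => by
    obtain ⟨e, -, f, -, hef⟩ := hw u hu v hv
    exact ⟨c e, c f, hef⟩
  refine ⟨σ, p, fun i => -σ * (q i + k * b i), fun e he => funext fun i => ?_⟩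
  have hi := congrFun (hqw e he) i
  rw [sum_congr rfl fun u hu => hb u (hHU e he hu), sum_add_distrib, sum_const, hH e he,
    Pi.add_apply, Pi.add_apply, sum_single_eq_mul_indexVector] at hi
  have hσ : (σ : ℤ) * σ = 1 := Int.units_coe_mul_self σ
  have hsingle : Pi.single (M := fun _ => ℤ) (c e) (σ : ℤ) i = σ * colorVector c e i := by
    simp [colorVector, Pi.single_apply]
  simp only [Pi.add_apply, Pi.smul_apply, nsmul_eq_mul] at hi ⊢
  rw [hsingle, hi]
  linear_combination -(indexVector p e i : ℤ) * hσ

end IndexColoring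

section Gadget

variable {V ι : Type*} [DecidableEq V] [DecidableEq ι] {k : ℕ} {H : Finset (Finset V)}
  {c : Finset V → ι}

/-- There are two perfect matchings of `H` on a common vertex set, each with at most `(k + 1) * s`
edges, one of which has at least `s` more edges of colour `i` than the other. -/
def HasGadget (H : Finset (Finset V)) (c : Finset V → ι) (k : ℕ) (i : ι) (s : ℕ) : Prop :=
  ∃ (M N : Finset (Finset V)) (W : Finset V), IsPerfectMatchingOn H M W ∧
    IsPerfectMatchingOn H N W ∧ #M ≤ (k + 1) * s ∧ #{e ∈ N | c e = i} + s ≤ #{e ∈ M | c e = i}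

omit [DecidableEq V] in
lemma sum_colorVector_apply (M : Finset (Finset V)) (i : ι) :
    (∑ e ∈ M, colorVector c e) i = #{e ∈ M | c e = i} := by
  simp only [colorVector, Finset.sum_apply, Pi.single_apply, ← sum_boole, eq_comm (a := i)]

lemma exists_card_filter_lt_of_not_matchingInvariant {m : ℕ} (hk : 1 ≤ k) (hH : HyperUniform k H)
    (h : ¬MatchingInvariant H m (colorVector c)) :
    ∃ (i : ι) (M N : Finset (Finset V)) (W : Finset V), IsPerfectMatchingOn H M W ∧
      IsPerfectMatchingOn H N W ∧ #M ≤ m ∧ #{e ∈ N | c e = i} < #{e ∈ M | c e = i} := by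
  simp only [MatchingInvariant, not_forall] at h
  obtain ⟨M, N, W, hM, hN, hm, hne⟩ := h
  obtain ⟨i, hi⟩ := Function.ne_iff.1 hne
  rw [sum_colorVector_apply, sum_colorVector_apply, Ne, Nat.cast_inj] at hi
  have hcard : #N = #M :=
    Nat.eq_of_mul_eq_mul_right hk ((hN.card_eq hH).symm.trans (hM.card_eq hH))
  obtain hlt | hlt := Nat.lt_or_gt_of_ne hi
  · exact ⟨i, N, M, W, hN, hM, hcard ▸ hm, hlt⟩
  · exact ⟨i, M, N, W, hM, hN, hm, hlt⟩

lemma exists_lt_and_not_succ {P : ℕ → Prop} {s : ℕ} (h0 : P 0) (hs : ¬P s) :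
    ∃ j < s, P j ∧ ¬P (j + 1) := by
  induction s with
  | zero => exact absurd h0 hs
  | succ s ih =>
    by_cases h : P s
    · exact ⟨s, s.lt_succ_self, h, hs⟩
    · obtain ⟨j, hj, hPj⟩ := ih h
      exact ⟨j, hj.trans s.lt_succ_self, hPj⟩

lemma exists_hasGadget_or_matchingInvariant [Fintype V] [Fintype ι] (hk : 1 ≤ k)
    (hH : HyperUniform k H) (s : ℕ) :
    (∃ i, HasGadget H c k i s) ∨ ∃ U : Finset V, #Uᶜ ≤ Fintype.card ι * ((k + 1) * s * k) ∧
      MatchingInvariant {e ∈ H | e ⊆ U} (k + 1) (colorVector c) := by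
  refine or_iff_not_imp_left.2 fun hnot => ?_
  have hzero : ∀ i, HasGadget H c k i 0 := fun i =>
    have hempty : IsPerfectMatchingOn H ∅ ∅ := ⟨empty_subset H, by simp, by simp⟩
    ⟨∅, ∅, ∅, hempty, hempty, by simp, by simp⟩
  choose j hjs hgadget hmax using fun i =>
    exists_lt_and_not_succ (hzero i) (not_exists.1 hnot i)
  choose M N W hM hN hcard hlt using hgadget
  refine ⟨(univ.biUnion W)ᶜ, ?_, by_contra fun hinv => ?_⟩
  · rw [compl_compl, Fintype.card]
    refine card_biUnion_le_card_mul _ _ _ fun i _ => ?_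
    rw [(hM i).card_eq hH]
    gcongr
    exact (hcard i).trans (Nat.mul_le_mul_left _ (hjs i).le)
  · obtain ⟨i, M', N', W', hM', hN', hcard', hlt'⟩ :=
      exists_card_filter_lt_of_not_matchingInvariant hk
        (fun e he => hH e (mem_filter.1 he).1) hinv
    have hdisj : Disjoint (W i) W' := by
      have hW' := hM'.vertices_subset fun e he => (mem_filter.1 he).2
      refine Disjoint.mono_left (subset_biUnion_of_mem W (mem_univ i)) ?_
      exact disjoint_right.2 fun x hx => mem_compl.1 (hW' hx)
    refine hmax i ⟨M i ∪ M', N i ∪ N', W i ∪ W', (hM i).union (hM'.mono (filter_subset _ _)) hdisj,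
      (hN i).union (hN'.mono (filter_subset _ _)) hdisj, ?_, ?_⟩
    · exact (card_union_le _ _).trans (by rw [mul_add_one]; gcongr; exact hcard i)
    · rw [filter_union, filter_union, card_union_of_disjoint (s := {e ∈ M i | c e = i})]
      · have := card_union_le {e ∈ N i | c e = i} {e ∈ N' | c e = i}
        have := hlt i
        omega
      · exact disjoint_filter_filter ((hM i).disjoint hk hH (hM'.mono (filter_subset _ _)) hdisj)

end Gadget

section PartSizes

variable {V : Type*} [DecidableEq V] {r k : ℕ} {K M : Finset (Finset V)} {U W : Finset V}
  {c : Finset V → Fin r} {σ : ℤˣ} {p : V → Fin r} {a : Fin r → ℤ}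

/-- Up to an error of `η * n`, the parts of `U` have the sizes for which, in a hypergraph with
`IsIndexColoring σ p a c`, every matching covering almost all of the `n` vertices uses all `r`
colours almost equally often. -/
def HasBalancedSizes (k : ℕ) (σ : ℤˣ) (p : V → Fin r) (a : Fin r → ℤ) (U : Finset V) (n η : ℝ) :
    Prop :=
  ∀ l, |(indexVector p U l : ℝ) - (r * a l + (σ : ℤ)) / (r * k) * n| ≤ η * n

omit [DecidableEq V] in
lemma indexVector_add_card_le {ι : Type*} [DecidableEq ι] (p : V → ι) (h : W ⊆ U) (l : ι) :
    indexVector p U l + #W ≤ indexVector p W l + #U := by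
  unfold indexVector
  rw [← card_filter_add_card_filter_not (s := U) (p · = l),
    ← card_filter_add_card_filter_not (s := W) (p · = l)]
  have := card_le_card (filter_subset_filter (fun x => ¬p x = l) h)
  omega

omit [DecidableEq V] in
lemma abs_indexVector_sub_le {ι : Type*} [DecidableEq ι] (p : V → ι) (h : W ⊆ U) (l : ι) :
    |(indexVector p U l : ℝ) - indexVector p W l| ≤ #U - #W := by
  have hle : (indexVector p W l : ℝ) ≤ indexVector p U l := by
    exact_mod_cast indexVector_mono p h l
  have : (indexVector p U l : ℝ) + #W ≤ indexVector p W l + #U := by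
    exact_mod_cast indexVector_add_card_le p h l
  rw [abs_of_nonneg (sub_nonneg.2 hle)]
  linarith

omit [DecidableEq V] in
lemma IsIndexColoring.sum_add_eq (h : IsIndexColoring σ p a c K) (hK : HyperUniform k K)
    {e : Finset V} (he : e ∈ K) : ∑ l, a l + σ = k := by
  rw [← hK e he, ← sum_indexVector p e, Nat.cast_sum, sum_congr rfl fun l _ => congrFun (h e he) l]
  simp [sum_add_distrib]

omit [DecidableEq V] in
lemma IsIndexColoring.abs_apply_le (h : IsIndexColoring σ p a c K) (hK : HyperUniform k K)
    {e : Finset V} (he : e ∈ K) (l : Fin r) : |a l| ≤ k + 1 := by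
  have hl := congrFun (h e he) l
  have hle : indexVector p e l ≤ k := hK e he ▸ card_le_card (filter_subset _ _)
  have hσ : |Pi.single (M := fun _ => ℤ) (c e) (σ : ℤ) l| ≤ 1 := by
    rw [Pi.single_apply]
    split_ifs
    · exact (Int.isUnit_iff_abs_eq.1 σ.isUnit).le
    · simp
  rw [Pi.add_apply] at hl
  rw [abs_le] at hσ ⊢
  omega

lemma IsIndexColoring.indexVector_eq (h : IsIndexColoring σ p a c K)
    (hM : IsPerfectMatchingOn K M W) (l : Fin r) :
    (indexVector p W l : ℤ) = #M * a l + σ * #{e ∈ M | c e = l} := by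
  rw [hM.indexVector_eq p l, Nat.cast_sum,
    sum_congr rfl fun e he => congrFun (h e (hM.subset he)) l]
  simp [sum_add_distrib, Pi.single_apply, ← sum_filter, eq_comm (a := l), mul_comm]

lemma abs_sub_div_le {m k n η : ℝ} (hk : 0 < k) (hm : m * k ≤ n)
    (hcover : (1 - η) * n ≤ m * k) : |m - n / k| ≤ η * n / k := by
  rw [le_div_iff₀ hk, ← abs_of_pos hk, ← abs_mul, abs_of_pos hk, sub_mul, div_mul_cancel₀ _ hk.ne',
    abs_le]
  constructor <;> linarith

omit [DecidableEq V] in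
lemma abs_card_filter_sub_le (hk : 1 ≤ k) {n η : ℝ} (hn : #M * k ≤ n)
    (hcover : (1 - η) * n ≤ #M * k) (hcolor : ∀ i, #{e ∈ M | c e = i} ≤ n / (r * k) + η * n)
    (l : Fin r) : |(#{e ∈ M | c e = l} : ℝ) - n / (r * k)| ≤ r * (η * n) := by
  have hr : (1 : ℝ) ≤ r := by exact_mod_cast l.pos
  have hk' : (1 : ℝ) ≤ k := by exact_mod_cast hk
  have hηn : 0 ≤ η * n := by linarith
  have hcard : (#M : ℝ) ≤ #{e ∈ M | c e = l} + (r - 1) * (n / (r * k) + η * n) := by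
    have hfiber := card_eq_sum_card_fiberwise (f := c) (s := M) (t := univ) fun e _ => mem_univ _
    have hothers := sum_le_card_nsmul (univ.erase l) (fun i => (#{e ∈ M | c e = i} : ℝ)) _
      fun i _ => hcolor i
    rw [card_erase_of_mem (mem_univ l), card_univ, Fintype.card_fin, nsmul_eq_mul,
      Nat.cast_pred l.pos] at hothers
    rw [hfiber, ← add_sum_erase _ _ (mem_univ l)]
    push_cast
    gcongr
  have hM : n / k - η * n ≤ #M := by
    have := (abs_le.1 (abs_sub_div_le (by positivity) hn hcover)).1
    have := div_le_self hηn hk'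
    linarith
  have hsplit : n / k = n / (r * k) + (r - 1) * (n / (r * k)) := by
    field_simp
    ring
  rw [abs_le]
  constructor <;> nlinarith [hcolor l]

lemma IsIndexColoring.hasBalancedSizes (hk : 1 ≤ k) (h : IsIndexColoring σ p a c K)
    (hK : HyperUniform k K) (hM : IsPerfectMatchingOn K M W) (hWU : W ⊆ U) {n η : ℝ}
    (hη : η < 1) (hn : 0 < n) (hUn : #U ≤ n) (hcover : (1 - η) * n ≤ #M * k)
    (hcolor : ∀ i, #{e ∈ M | c e = i} ≤ n / (r * k) + η * n) :
    HasBalancedSizes k σ p a U n ((r + 3) * η) := by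
  intro l
  have hr : (0 : ℝ) < r := by exact_mod_cast l.pos
  have hWcard : (#W : ℝ) = #M * k := by exact_mod_cast hM.card_eq hK
  have hMn : (#M : ℝ) * k ≤ n := by
    rw [← hWcard]
    exact le_trans (by exact_mod_cast card_le_card hWU) hUn
  obtain ⟨e, he⟩ : M.Nonempty := by
    refine nonempty_iff_ne_empty.2 fun hempty => ?_
    rw [hempty, card_empty, Nat.cast_zero, zero_mul] at hcover
    nlinarith
  have hW : (indexVector p W l : ℝ) = #M * a l + (σ : ℤ) * #{e ∈ M | c e = l} := by
    exact_mod_cast h.indexVector_eq hM l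
  have huncovered : |(indexVector p U l : ℝ) - indexVector p W l| ≤ η * n :=
    (abs_indexVector_sub_le p hWU l).trans (by linarith)
  have hbase : |a l * (#M - n / k)| ≤ 2 * (η * n) := by
    have ha : |(a l : ℝ)| ≤ k + 1 := by exact_mod_cast h.abs_apply_le hK (hM.subset he) l
    have hk' : (1 : ℝ) ≤ k := by exact_mod_cast hk
    calc |a l * (#M - n / k)| = |(a l : ℝ)| * |(#M - n / k : ℝ)| := abs_mul _ _
      _ ≤ (2 * k) * (η * n / k) := mul_le_mul (by linarith)
          (abs_sub_div_le (by positivity) hMn hcover) (abs_nonneg _) (by positivity)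
      _ = 2 * (η * n) := by field_simp
  have hcount : |((σ : ℤ) : ℝ) * (#{e ∈ M | c e = l} - n / (r * k))| ≤ r * (η * n) := by
    have hσ : |((σ : ℤ) : ℝ)| = 1 := by exact_mod_cast Int.isUnit_iff_abs_eq.1 σ.isUnit
    rw [abs_mul, hσ, one_mul]
    exact abs_card_filter_sub_le hk hMn hcover hcolor l
  have hsplit : (indexVector p U l : ℝ) - (r * a l + (σ : ℤ)) / (r * k) * n =
      (indexVector p U l - indexVector p W l) + a l * (#M - n / k) +
        (σ : ℤ) * (#{e ∈ M | c e = l} - n / (r * k)) := by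
    rw [hW]
    field_simp
    ring
  rw [hsplit]
  refine (abs_add_three _ _ _).trans ?_
  linarith

omit [DecidableEq V] in
lemma HasBalancedSizes.pos {n η : ℝ} (h : HasBalancedSizes k σ p a U n η) (hr : 2 ≤ r)
    (hk : 1 ≤ k) (hn : 0 < n) (hη : η * (r * k) < 1) (l : Fin r) :
    0 < r * a l + σ ∧ 0 < indexVector p U l := by
  have hrk : (0 : ℝ) < r * k := by positivity
  obtain ⟨hlow, hup⟩ := abs_le.1 (h l)
  have hsplit : (r * a l + (σ : ℤ)) / (r * k) * n * (r * k) = (r * a l + (σ : ℤ)) * n := by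
    field_simp
  have herr : η * n * (r * k) < n := by nlinarith
  have hlow' := mul_le_mul_of_nonneg_right hlow hrk.le
  have hup' := mul_le_mul_of_nonneg_right hup hrk.le
  rw [sub_mul, hsplit] at hlow' hup'
  have hgt : -1 < r * a l + (σ : ℤ) := by
    have hi : (0 : ℝ) ≤ indexVector p U l * (r * k) := by positivity
    have : (-1 : ℝ) < r * a l + (σ : ℤ) := by
      by_contra! hle
      nlinarith
    exact_mod_cast this
  have hne : r * a l + (σ : ℤ) ≠ 0 := fun h0 => by
    have hdvd : (r : ℤ) ∣ σ := ⟨-a l, by linarith⟩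
    have := Int.isUnit_iff_natAbs_eq.1 (isUnit_of_dvd_unit hdvd σ.isUnit)
    omega
  refine ⟨by omega, ?_⟩
  have hone : (1 : ℝ) ≤ r * a l + (σ : ℤ) := by
    exact_mod_cast (show 1 ≤ r * a l + (σ : ℤ) by omega)
  have hpos : (0 : ℝ) < indexVector p U l * (r * k) := by nlinarith
  exact_mod_cast pos_of_mul_pos_left hpos hrk.le

end PartSizes

section LinkBounds

open Filter Topology

variable {V : Type*} [DecidableEq V] {r k : ℕ} {K : Finset (Finset V)} {U : Finset V} {v : V}
  {c : Finset V → Fin r} {σ : ℤˣ} {p : V → Fin r}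

lemma subset_of_mem_link (hKU : ∀ e ∈ K, e ⊆ U) {T : Finset V} (hT : T ∈ link K v) : T ⊆ U :=
  (subset_insert v T).trans (hKU _ (mem_link.1 hT).2)

lemma IsIndexColoring.indexVector_add_single {a : Fin r → ℤ} (h : IsIndexColoring σ p a c K)
    {T : Finset V} (hT : T ∈ link K v) (l : Fin r) :
    (indexVector p T l : ℤ) + Pi.single (M := fun _ => ℤ) (p v) 1 l =
      a l + Pi.single (M := fun _ => ℤ) (c (insert v T)) (σ : ℤ) l := by
  have hl := congrFun (h _ (mem_link.1 hT).2) l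
  rw [indexVector_insert p (mem_link.1 hT).1] at hl
  rw [← Pi.add_apply a, ← hl, Pi.add_apply, Nat.cast_add, Pi.single_apply, Pi.single_apply]
  push_cast
  rfl

lemma IsIndexColoring.link_subset {a : Fin r → ℕ} (h : IsIndexColoring 1 p (fun l => (a l : ℤ)) c K)
    (hKU : ∀ e ∈ K, e ⊆ U) (v : V) :
    link K v ⊆ {T ∈ U.powerset | indexVector p T ∈ linkVectors a (p v)} := by
  intro T hT
  rw [mem_filter, mem_powerset, mem_linkVectors]
  refine ⟨subset_of_mem_link hKU hT, c (insert v T), funext fun l => ?_⟩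
  have hl := h.indexVector_add_single hT l
  simp only [Pi.single_apply, Pi.add_apply, Units.val_one] at hl ⊢
  split_ifs at hl ⊢ <;> omega

lemma IsIndexColoring.card_link_le {a : Fin r → ℕ}
    (h : IsIndexColoring 1 p (fun l => (a l : ℤ)) c K) (hKU : ∀ e ∈ K, e ⊆ U) (v : V) :
    #(link K v) ≤ linkDensity a (p v) fun l => indexVector p U l :=
  le_trans (mod_cast card_le_card (h.link_subset hKU v)) (card_filter_indexVector_mem_le p U _)

lemma eventually_linkDensity_le (hk : 1 ≤ k) {ε : ℝ} (hε : 0 < ε) (a : Fin r → ℕ)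
    (ha : ∑ l, a l = k - 1) {j : Fin r} (hmin : ∀ l, a j ≤ a l) :
    ∀ᶠ η in 𝓝[>] (0 : ℝ), ∀ (n : ℝ) (x : Fin r → ℝ), 0 < n →
      (∀ l, |x l - criticalPoint k a l * n| ≤ η * n) →
        linkDensity a j x ≤ (gThr k r + ε) * dividedPow (k - 1) n := by
  have hfact : (0 : ℝ) < (k - 1).factorial := by positivity
  have hlt : linkDensity a j (criticalPoint k a) < (gThr k r + ε) / (k - 1).factorial := by
    rw [lt_div_iff₀' hfact]
    exact (vertexDensity_le_gThr hk ha hmin).trans_lt (lt_add_of_pos_right _ hε)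
  obtain ⟨δ, hδ, hball⟩ := Metric.eventually_nhds_iff.1
    ((continuous_linkDensity a j).continuousAt.eventually_lt_const hlt)
  filter_upwards [Ioo_mem_nhdsGT hδ] with η hη n x hn hx
  have hdist : dist (fun l => n⁻¹ * x l) (criticalPoint k a) < δ := by
    refine (dist_pi_le_iff hη.1.le).2 (fun l => ?_) |>.trans_lt hη.2
    have hscale : n⁻¹ * x l - criticalPoint k a l = (x l - criticalPoint k a l * n) / n := by
      field_simp
    rw [Real.dist_eq, hscale, abs_div, abs_of_pos hn, div_le_iff₀ hn]
    exact hx l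
  calc linkDensity a j x = linkDensity a j (fun l => n * (n⁻¹ * x l)) := by
        simp only [mul_inv_cancel_left₀ hn.ne']
    _ = n ^ (k - 1) * linkDensity a j (fun l => n⁻¹ * x l) := by rw [linkDensity_mul, ha]
    _ ≤ n ^ (k - 1) * ((gThr k r + ε) / (k - 1).factorial) := by
        gcongr
        exact (hball hdist).le
    _ = (gThr k r + ε) * dividedPow (k - 1) n := by
        rw [dividedPow]
        ring

lemma IsIndexColoring.ne_of_mem_link {a : Fin r → ℤ} (h : IsIndexColoring (-1) p a c K)
    (hv : a (p v) = 1) {T : Finset V} (hT : T ∈ link K v) {x : V} (hx : x ∈ T) : p x ≠ p v := by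
  intro hxv
  have hpos : 0 < indexVector p T (p v) := card_pos.2 ⟨x, mem_filter.2 ⟨hx, hxv⟩⟩
  have hl := h.indexVector_add_single hT (p v)
  rw [Pi.single_eq_same, hv, Pi.single_apply, Units.val_neg, Units.val_one] at hl
  split_ifs at hl <;> omega

lemma IsIndexColoring.card_link_le_of_eq_one {a : Fin r → ℤ}
    (h : IsIndexColoring (-1) p a c K) (hK : HyperUniform k K) (hKU : ∀ e ∈ K, e ⊆ U)
    (hv : a (p v) = 1) {n η : ℝ} (hU : #U ≤ n) (hsize : HasBalancedSizes k (-1) p a U n η) :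
    #(link K v) ≤ (1 - ((r : ℝ) - 1) / (r * k) + η) ^ (k - 1) * dividedPow (k - 1) n := by
  rw [← dividedPow_mul]
  refine card_le_dividedPow (S := {x ∈ U | p x ≠ p v})
    (fun T hT => ⟨fun x hx => ?_, card_of_mem_link hK hT⟩) ?_
  · exact mem_filter.2 ⟨subset_of_mem_link hKU hT hx, h.ne_of_mem_link hv hT hx⟩
  · have hcard : (indexVector p U (p v) : ℝ) + #{x ∈ U | p x ≠ p v} = #U := by
      exact_mod_cast card_filter_add_card_filter_not (s := U) (p · = p v)
    have hlow := (abs_le.1 (hsize (p v))).1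
    rw [hv] at hlow
    push_cast at hlow
    ring_nf at hlow ⊢
    linarith

end LinkBounds

section ThreeParts

variable {ι : Type*}

lemma prod_dividedPow_le (S : Finset ι) (s : ι → ℕ) {x : ι → ℝ} (hx : ∀ l, 0 ≤ x l) :
    ∏ l ∈ S, dividedPow (s l) (x l) ≤ dividedPow (∑ l ∈ S, s l) (∑ l ∈ S, x l) := by
  classical
  induction S using Finset.induction_on with
  | empty => simp [dividedPow]
  | insert l S hl ih =>
    rw [prod_insert hl, sum_insert hl, sum_insert hl, dividedPow_add]
    have hsum : 0 ≤ ∑ l ∈ S, x l := sum_nonneg fun l _ => hx l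
    refine (mul_le_mul_of_nonneg_left ih (dividedPow_nonneg _ (hx l))).trans ?_
    exact single_le_sum (a := (s l, ∑ l ∈ S, s l))
      (f := fun m => dividedPow m.1 (x l) * dividedPow m.2 (∑ l ∈ S, x l))
      (fun m _ => mul_nonneg (dividedPow_nonneg _ (hx l)) (dividedPow_nonneg _ hsum))
      (HasAntidiagonal.mem_antidiagonal.2 rfl)

lemma four_mul_dividedMonomial_le [Fintype ι] {s : ι → ℕ} {i j l : ι} (hij : i ≠ j) (hil : i ≠ l)
    (hjl : j ≠ l) (hi : 1 ≤ s i) (hj : 1 ≤ s j) (hl : 1 ≤ s l) {x : ι → ℝ} (hx : ∀ l, 0 ≤ x l) :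
    4 * dividedMonomial s x ≤ dividedPow (∑ l, s l) (∑ l, x l) := by
  classical
  set R := (univ.erase i).erase j
  have hjmem : j ∈ univ.erase i := mem_erase.2 ⟨hij.symm, mem_univ j⟩
  have hlR : l ∈ R := mem_erase.2 ⟨hjl.symm, mem_erase.2 ⟨hil.symm, mem_univ l⟩⟩
  have hsum {α : Type} [AddCommMonoid α] (f : ι → α) : ∑ l, f l = f i + f j + ∑ l ∈ R, f l := by
    rw [← add_sum_erase _ f (mem_univ i), ← add_sum_erase _ f hjmem, add_assoc]
  have hrest : 1 ≤ ∑ l ∈ R, s l := hl.trans (single_le_sum (fun _ _ => Nat.zero_le _) hlR)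
  calc 4 * dividedMonomial s x
      = 4 * (dividedPow (s i) (x i) * dividedPow (s j) (x j) *
          ∏ l ∈ R, dividedPow (s l) (x l)) := by
        rw [dividedMonomial, ← mul_prod_erase _ _ (mem_univ i), ← mul_prod_erase _ _ hjmem,
          mul_assoc]
    _ ≤ 4 * (dividedPow (s i) (x i) * dividedPow (s j) (x j) *
          dividedPow (∑ l ∈ R, s l) (∑ l ∈ R, x l)) := by
        gcongr
        · exact mul_nonneg (dividedPow_nonneg _ (hx i)) (dividedPow_nonneg _ (hx j))
        · exact prod_dividedPow_le R s hx
    _ ≤ dividedPow (∑ l, s l) (∑ l, x l) := by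
        rw [hsum, hsum]
        exact four_mul_dividedPow_mul_mul_le hi hj hrest (hx i) (hx j)
          (sum_nonneg fun l _ => hx l)

lemma card_add_card_add_card_le {α : Type*} [DecidableEq α] (A B C : Finset α) :
    #A + #B + #C ≤ #(A ∪ B ∪ C) + (#(A ∩ B) + #(A ∩ C) + #(B ∩ C)) := by
  have hAB := card_union_add_card_inter A B
  have hABC := card_union_add_card_inter (A ∪ B) C
  have hsplit : #((A ∪ B) ∩ C) ≤ #(A ∩ C) + #(B ∩ C) := by
    rw [union_inter_distrib_right]
    exact card_union_le _ _
  omega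

variable {V : Type*} [DecidableEq V] {r k : ℕ} {K : Finset (Finset V)} {U : Finset V}
  {c : Finset V → Fin r} {p : V → Fin r} {a : Fin r → ℤ}

lemma IsIndexColoring.eq_sub_sub {u v : V} (h : IsIndexColoring (-1) p a c K)
    (huv : p u ≠ p v) {T : Finset V} (hTu : T ∈ link K u) (hTv : T ∈ link K v) (l : Fin r) :
    (indexVector p T l : ℤ) = a l - Pi.single (M := fun _ => ℤ) (p u) 1 l -
      Pi.single (M := fun _ => ℤ) (p v) 1 l := by
  have hu := h.indexVector_add_single hTu
  have hv := h.indexVector_add_single hTv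
  have hcolor : c (insert u T) = p v := by
    by_contra hne
    have hu' := hu (p v)
    have hv' := hv (p v)
    simp only [Pi.single_apply, Units.val_neg, Units.val_one, if_true, if_neg (Ne.symm hne),
      if_neg huv.symm] at hu' hv'
    split_ifs at hv' <;> omega
  have hl := hu l
  rw [hcolor, Units.val_neg, Units.val_one, Pi.single_neg, Pi.neg_apply] at hl
  linarith

lemma IsIndexColoring.indexVector_eq_of_mem_link_inter {u v : V}
    (h : IsIndexColoring (-1) p a c K) (huv : p u ≠ p v) {S T : Finset V}
    (hS : S ∈ link K u ∩ link K v) (hT : T ∈ link K u ∩ link K v) :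
    indexVector p S = indexVector p T := by
  rw [mem_inter] at hS hT
  exact funext fun l => by
    exact_mod_cast (h.eq_sub_sub huv hS.1 hS.2 l).trans (h.eq_sub_sub huv hT.1 hT.2 l).symm

lemma IsIndexColoring.one_le_indexVector {u v : V} (h : IsIndexColoring (-1) p a c K)
    (ha : ∀ l, 2 ≤ a l) (huv : p u ≠ p v) {T : Finset V} (hT : T ∈ link K u ∩ link K v)
    (l : Fin r) : 1 ≤ indexVector p T l := by
  rw [mem_inter] at hT
  have hl := h.eq_sub_sub huv hT.1 hT.2 l
  have := ha l
  simp only [Pi.single_apply] at hl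
  split_ifs at hl with hu hv <;> first | exact absurd (hu.symm.trans hv) huv | omega

lemma IsIndexColoring.four_mul_card_link_inter_le (h : IsIndexColoring (-1) p a c K)
    (hK : HyperUniform k K) (hKU : ∀ e ∈ K, e ⊆ U) (ha : ∀ l, 2 ≤ a l) {u v : V}
    (huv : p u ≠ p v) {l : Fin r} (hul : p u ≠ l) (hvl : p v ≠ l) {n : ℝ} (hU : #U ≤ n) :
    4 * (#(link K u ∩ link K v) : ℝ) ≤ dividedPow (k - 1) n := by
  obtain hempty | ⟨T₀, hT₀⟩ := (link K u ∩ link K v).eq_empty_or_nonempty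
  · rw [hempty, card_empty, Nat.cast_zero, mul_zero]
    exact dividedPow_nonneg _ ((Nat.cast_nonneg _).trans hU)
  set s := indexVector p T₀ with hs
  have hsub : link K u ∩ link K v ⊆ {T ∈ U.powerset | indexVector p T ∈ ({s} : Finset _)} := by
    intro T hT
    rw [mem_filter, mem_powerset, mem_singleton]
    exact ⟨subset_of_mem_link hKU (mem_inter.1 hT).1,
      h.indexVector_eq_of_mem_link_inter huv hT hT₀⟩
  have hcard : (#(link K u ∩ link K v) : ℝ) ≤ dividedMonomial s fun l => indexVector p U l :=
    le_trans (by exact_mod_cast card_le_card hsub)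
      ((card_filter_indexVector_mem_le p U _).trans_eq (sum_singleton _ _))
  have hone := h.one_le_indexVector ha huv hT₀
  calc 4 * (#(link K u ∩ link K v) : ℝ)
      ≤ 4 * dividedMonomial s (fun l => indexVector p U l) := by gcongr
    _ ≤ dividedPow (∑ l, s l) (∑ l, (indexVector p U l : ℝ)) :=
        four_mul_dividedMonomial_le huv hul hvl (hone _) (hone _) (hone _)
          fun l => Nat.cast_nonneg _
    _ = dividedPow (k - 1) #U := by
        rw [hs, sum_indexVector, card_of_mem_link hK (mem_inter.1 hT₀).1, ← Nat.cast_sum,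
          sum_indexVector]
    _ ≤ dividedPow (k - 1) n := dividedPow_le_dividedPow _ (Nat.cast_nonneg _) hU

/-- The links of vertices in three different parts pairwise share at most a quarter of all sets, so
by inclusion-exclusion their sizes sum to at most `7 / 4` of all sets. -/
lemma IsIndexColoring.exists_card_link_le (h : IsIndexColoring (-1) p a c K)
    (hK : HyperUniform k K) (hKU : ∀ e ∈ K, e ⊆ U) (ha : ∀ l, 2 ≤ a l) (hr : 3 ≤ r)
    (hparts : ∀ l, ∃ v ∈ U, p v = l) {n : ℝ} (hU : #U ≤ n) :
    ∃ v ∈ U, #(link K v) ≤ 7 / 12 * dividedPow (k - 1) n := by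
  choose v hvU hv using hparts
  obtain ⟨i, -, j, -, l, -, hij, hil, hjl⟩ :=
    two_lt_card.1 (show 2 < #(univ : Finset (Fin r)) by rwa [card_univ, Fintype.card_fin])
  have hinter {i j l : Fin r} (hij : i ≠ j) (hil : i ≠ l) (hjl : j ≠ l) :
      4 * (#(link K (v i) ∩ link K (v j)) : ℝ) ≤ dividedPow (k - 1) n :=
    h.four_mul_card_link_inter_le hK hKU ha (by rwa [hv, hv]) (by rwa [hv]) (by rwa [hv]) hU
  have hunion : (#(link K (v i) ∪ link K (v j) ∪ link K (v l)) : ℝ) ≤ dividedPow (k - 1) n := by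
    refine card_le_dividedPow (fun T hT => ?_) hU
    obtain ⟨m, hT⟩ : ∃ m, T ∈ link K (v m) := by
      simp only [mem_union] at hT
      tauto
    exact ⟨subset_of_mem_link hKU hT, card_of_mem_link hK hT⟩
  have hsum : (#(link K (v i)) + #(link K (v j)) + #(link K (v l)) : ℝ) ≤
      #(link K (v i) ∪ link K (v j) ∪ link K (v l)) + (#(link K (v i) ∩ link K (v j)) +
        #(link K (v i) ∩ link K (v l)) + #(link K (v j) ∩ link K (v l))) := by
    exact_mod_cast card_add_card_add_card_le _ _ _
  have h₁ := hinter hij hil hjl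
  have h₂ := hinter hil hij hjl.symm
  have h₃ := hinter hjl hij.symm hil.symm
  by_contra! hlarge
  linarith [hlarge _ (hvU i), hlarge _ (hvU j), hlarge _ (hvU l)]

end ThreeParts

section RigidHypergraph

open Filter Topology

variable {r k : ℕ}

lemma indexVector_rev_comp {V : Type*} (p : V → Fin r) (T : Finset V) (l : Fin r) :
    indexVector (Fin.rev ∘ p) T l = indexVector p T l.rev := by
  simp only [indexVector, Function.comp_apply, Fin.rev_eq_iff]

lemma IsIndexColoring.comp_rev {V : Type*} {K : Finset (Finset V)} {c : Finset V → Fin 2}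
    {p : V → Fin 2} {a : Fin 2 → ℤ} (h : IsIndexColoring (-1) p a c K) :
    IsIndexColoring 1 (Fin.rev ∘ p) (fun l => a l.rev - 1) c K := by
  intro e he
  funext l
  have hl := congrFun (h e he) l.rev
  rw [indexVector_rev_comp, hl]
  generalize c e = i
  fin_cases l <;> fin_cases i <;> simp [sub_eq_add_neg]

lemma HasBalancedSizes.comp_rev {V : Type*} {U : Finset V} {p : V → Fin 2} {a : Fin 2 → ℤ}
    {n η : ℝ} (h : HasBalancedSizes k (-1) p a U n η) :
    HasBalancedSizes k 1 (Fin.rev ∘ p) (fun l => a l.rev - 1) U n η := by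
  intro l
  have hl := h l.rev
  rw [indexVector_rev_comp]
  push_cast at hl ⊢
  convert hl using 5
  ring

lemma eventually_exists_card_link_le_of_one (hk : 1 ≤ k) (hr : 0 < r) {ε : ℝ} (hε : 0 < ε) :
    ∀ᶠ η in 𝓝[>] (0 : ℝ), ∀ {V : Type*} [DecidableEq V] {K : Finset (Finset V)} {U : Finset V}
      {c : Finset V → Fin r} {p : V → Fin r} {a : Fin r → ℤ} {n : ℝ},
      IsIndexColoring 1 p a c K → (∀ e ∈ K, e ⊆ U) → (∀ l, 0 ≤ a l) → ∑ l, a l + 1 = k →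
      (∀ l, ∃ v ∈ U, p v = l) → 0 < n → HasBalancedSizes k 1 p a U n η →
        ∃ v ∈ U, #(link K v) ≤ (gThr k r + ε) * dividedPow (k - 1) n := by
  have hdensity : ∀ᶠ η in 𝓝[>] (0 : ℝ), ∀ a ∈ piAntidiag (univ : Finset (Fin r)) (k - 1),
      ∀ j, (∀ l, a j ≤ a l) → ∀ (n : ℝ) (x : Fin r → ℝ), 0 < n →
        (∀ l, |x l - criticalPoint k a l * n| ≤ η * n) →
          linkDensity a j x ≤ (gThr k r + ε) * dividedPow (k - 1) n :=
    (eventually_all_finset _).2 fun a ha => eventually_all.2 fun j =>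
      eventually_imp_distrib_left.2 fun hmin =>
        eventually_linkDensity_le hk hε a (mem_piAntidiag.1 ha).1 hmin
  filter_upwards [hdensity] with η hη V _ K U c p a n h hKU ha hsum hparts hn hsize
  lift a to Fin r → ℕ using ha
  have hsum' : ∑ l, a l = k - 1 := by
    have : ∑ l, a l + 1 = k := by zify; exact hsum
    omega
  obtain ⟨j, -, hj⟩ := exists_min_image univ a ⟨(⟨0, hr⟩ : Fin r), mem_univ _⟩
  obtain ⟨v, hv, rfl⟩ := hparts j
  refine ⟨v, hv, (h.card_link_le hKU v).trans ?_⟩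
  refine hη a (by simpa using hsum') _ (fun l => hj l (mem_univ l)) n _ hn fun l => ?_
  simpa [criticalPoint] using hsize l

lemma eventually_pow_le_gThr_add (hk : 1 ≤ k) (hr : 2 ≤ r) {ε : ℝ} (hε : 0 < ε) :
    ∀ᶠ η in 𝓝[>] (0 : ℝ), (1 - ((r : ℝ) - 1) / (r * k) + η) ^ (k - 1) ≤ gThr k r + ε := by
  have hcont : Continuous fun η : ℝ => (1 - ((r : ℝ) - 1) / (r * k) + η) ^ (k - 1) := by fun_prop
  have hlt : (1 - ((r : ℝ) - 1) / (r * k) + 0) ^ (k - 1) < gThr k r + ε := by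
    rw [add_zero]
    exact (one_sub_pow_le_gThr hk hr).trans_lt (lt_add_of_pos_right _ hε)
  exact ((hcont.continuousAt.eventually_lt_const hlt).filter_mono nhdsWithin_le_nhds).mono
    fun _ => le_of_lt

lemma eventually_exists_card_link_le_of_neg_one (hk : 1 ≤ k) (hr : 2 ≤ r) {ε : ℝ} (hε : 0 < ε) :
    ∀ᶠ η in 𝓝[>] (0 : ℝ), ∀ {V : Type*} [DecidableEq V] {K : Finset (Finset V)} {U : Finset V}
      {c : Finset V → Fin r} {p : V → Fin r} {a : Fin r → ℤ} {n : ℝ},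
      IsIndexColoring (-1) p a c K → HyperUniform k K → (∀ e ∈ K, e ⊆ U) → (∀ l, 1 ≤ a l) →
      ∑ l, a l - 1 = k → (∀ l, ∃ v ∈ U, p v = l) → 0 < n → #U ≤ n →
      HasBalancedSizes k (-1) p a U n η →
        ∃ v ∈ U, #(link K v) ≤ (max (fThr k) (gThr k r) + ε) * dividedPow (k - 1) n := by
  filter_upwards [eventually_exists_card_link_le_of_one hk (zero_lt_two.trans_le hr) hε,
    eventually_pow_le_gThr_add hk hr hε]
    with η hplus hpow V _ K U c p a n h hK hKU ha hsum hparts hn hU hsize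
  have hE : 0 ≤ dividedPow (k - 1) n := dividedPow_nonneg _ hn.le
  by_cases hone : ∃ i, a i = 1
  · obtain ⟨i, hi⟩ := hone
    obtain ⟨v, hv, rfl⟩ := hparts i
    exact ⟨v, hv, (h.card_link_le_of_eq_one hK hKU hi hU hsize).trans <|
      mul_le_mul_of_nonneg_right (hpow.trans (by gcongr; exact le_max_right _ _)) hE⟩
  have htwo (l : Fin r) : 2 ≤ a l := (ha l).lt_of_ne' (not_exists.1 hone l)
  obtain rfl | hr := hr.eq_or_lt
  · have hparts_rev (l : Fin 2) : ∃ v ∈ U, (Fin.rev ∘ p) v = l :=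
      (hparts l.rev).imp fun v hv => ⟨hv.1, Fin.rev_eq_iff.2 hv.2⟩
    have hsum_rev : ∑ l : Fin 2, (a l.rev - 1) + 1 = k := by
      have hrev : ∑ l : Fin 2, a l.rev = ∑ l, a l := Equiv.sum_comp Fin.revPerm a
      rw [← hsum, sum_sub_distrib, hrev, sum_const, card_fin]
      ring
    obtain ⟨v, hv, hle⟩ := hplus h.comp_rev hKU (fun l => sub_nonneg.2 (ha l.rev)) hsum_rev
      hparts_rev hn hsize.comp_rev
    exact ⟨v, hv, hle.trans <| mul_le_mul_of_nonneg_right (by gcongr; exact le_max_right _ _) hE⟩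
  · have hk5 : 5 ≤ k := by
      have hle : (r : ℤ) * 2 ≤ ∑ l, a l := by
        simpa using card_nsmul_le_sum univ a 2 fun l _ => htwo l
      omega
    obtain ⟨v, hv, hle⟩ := h.exists_card_link_le hK hKU htwo hr hparts hU
    refine ⟨v, hv, hle.trans (mul_le_mul_of_nonneg_right ?_ hE)⟩
    exact (seven_twelfths_le_fThr hk5).trans
      ((le_max_left _ _).trans (le_add_of_nonneg_right hε.le))

lemma eventually_exists_card_link_le (hk : 1 ≤ k) (hr : 2 ≤ r) {ε : ℝ} (hε : 0 < ε) :
    ∀ᶠ η in 𝓝[>] (0 : ℝ), ∀ {V : Type*} [DecidableEq V] {K : Finset (Finset V)} {U : Finset V}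
      {c : Finset V → Fin r} {σ : ℤˣ} {p : V → Fin r} {a : Fin r → ℤ} {n : ℝ},
      IsIndexColoring σ p a c K → HyperUniform k K → K.Nonempty → (∀ e ∈ K, e ⊆ U) → 0 < n →
      #U ≤ n → HasBalancedSizes k σ p a U n η →
        ∃ v ∈ U, #(link K v) ≤ (max (fThr k) (gThr k r) + ε) * dividedPow (k - 1) n := by
  have hsmall : ∀ᶠ η : ℝ in 𝓝[>] 0, η * (r * k) < 1 := by
    have hcont : Continuous fun η : ℝ => η * (r * k) := by fun_prop
    exact (hcont.continuousAt.eventually_lt_const (by simp)).filter_mono nhdsWithin_le_nhds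
  filter_upwards [hsmall, eventually_exists_card_link_le_of_one hk (zero_lt_two.trans_le hr) hε,
    eventually_exists_card_link_le_of_neg_one hk hr hε]
    with η hη hplus hminus V _ K U c σ p a n h hK ⟨e, he⟩ hKU hn hU hsize
  have hsum := h.sum_add_eq hK he
  have hpos := hsize.pos hr hk hn hη
  have hparts (l : Fin r) : ∃ v ∈ U, p v = l := exists_mem_of_indexVector_pos (hpos l).2
  obtain rfl | rfl := Int.units_eq_one_or σ
  · have ha (l : Fin r) : 0 ≤ a l := by
      have hl := (hpos l).1
      rw [Units.val_one] at hl
      by_contra! hneg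
      nlinarith
    obtain ⟨v, hv, hle⟩ := hplus h hKU ha hsum hparts hn hsize
    exact ⟨v, hv, hle.trans <| mul_le_mul_of_nonneg_right (by gcongr; exact le_max_right _ _)
      (dividedPow_nonneg _ hn.le)⟩
  · have ha (l : Fin r) : 1 ≤ a l := by
      have hl := (hpos l).1
      rw [Units.val_neg, Units.val_one] at hl
      by_contra! hneg
      nlinarith
    exact hminus h hK hKU ha hsum hparts hn hU hsize

end RigidHypergraph

section DegreeRobustness

variable {V : Type*} [DecidableEq V] {k : ℕ} {H : Finset (Finset V)} {x θ : ℝ}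

lemma choose_pred_le_dividedPow (j n : ℕ) : ((n - 1).choose j : ℝ) ≤ dividedPow j n := by
  rw [dividedPow, le_div_iff₀' (by positivity)]
  exact factorial_mul_choose_pred_le_pow j n

lemma link_filter_subset {U : Finset V} {v : V} (hv : v ∈ U) :
    link {e ∈ H | e ⊆ U} v = {T ∈ link H v | T ⊆ U} := by
  ext T
  simp only [mem_link, mem_filter, insert_subset_iff, hv, true_and, and_assoc]

lemma card_le_card_filter_subset_add {M : Finset (Finset V)} {W : Finset V}
    (hM : IsPerfectMatchingOn H M W) (U : Finset V) : #M ≤ #{e ∈ M | e ⊆ U} + #(W \ U) := by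
  rw [← card_filter_add_card_filter_not (s := M) (· ⊆ U)]
  gcongr
  calc #{e ∈ M | ¬e ⊆ U} ≤ #({e ∈ M | ¬e ⊆ U}.biUnion fun e => e \ U) := by
        refine card_le_card_biUnion (fun e he f hf hef => ?_) fun e he =>
          sdiff_nonempty.2 (mem_filter.1 he).2
        exact (hM.pairwiseDisjoint (mem_filter.1 he).1 (mem_filter.1 hf).1 hef).mono
          sdiff_subset sdiff_subset
    _ ≤ #(W \ U) := card_le_card <| biUnion_subset.2 fun e he =>
        sdiff_subset_sdiff (hM.edge_subset (mem_filter.1 he).1) subset_rfl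

variable [Fintype V]

lemma one_sub_mul_card_le_card_filter_subset_mul (hH : HyperUniform k H) {M : Finset (Finset V)}
    (hM : IsPerfectMatchingOn H M univ) {U : Finset V} (hU : #Uᶜ * k ≤ θ * Fintype.card V) :
    (1 - θ) * Fintype.card V ≤ #{e ∈ M | e ⊆ U} * k := by
  have hcard : (Fintype.card V : ℝ) = #M * k := by exact_mod_cast hM.card_eq hH
  have hle : (#M : ℝ) ≤ #{e ∈ M | e ⊆ U} + #Uᶜ := by
    exact_mod_cast card_le_card_filter_subset_add hM U
  have := mul_le_mul_of_nonneg_right hle (Nat.cast_nonneg k)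
  linarith

lemma sub_mul_dividedPow_le_card_filter_disjoint (hk : 2 ≤ k) (hH : HyperUniform k H) {v : V}
    (hx : x * dividedPow (k - 1) (Fintype.card V) ≤ hdeg H v) {Y : Finset V}
    (hY : #Y * k ≤ θ * Fintype.card V) :
    (x - θ) * dividedPow (k - 1) (Fintype.card V) ≤ #{T ∈ link H v | Disjoint T Y} := by
  have hdeg_le : (hdeg H v : ℝ) ≤ #{T ∈ link H v | Disjoint T Y} +
      #Y * ((Fintype.card V - 1).choose (k - 2) : ℝ) := by
    exact_mod_cast hdeg_le_card_filter_disjoint_add hH v Y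
  have hlost : #Y * ((Fintype.card V - 1).choose (k - 2) : ℝ) ≤
      θ * dividedPow (k - 1) (Fintype.card V) := by
    obtain ⟨m, rfl⟩ := Nat.exists_eq_add_of_le' hk
    have hYm : (#Y : ℝ) ≤ θ * Fintype.card V / (m + 1) := by
      rw [le_div_iff₀ (by positivity)]
      push_cast at hY
      nlinarith
    calc #Y * ((Fintype.card V - 1).choose m : ℝ)
        ≤ θ * Fintype.card V / (m + 1) * dividedPow m (Fintype.card V) := by
          have := choose_pred_le_dividedPow m (Fintype.card V)
          have := (Nat.cast_nonneg _).trans hYm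
          gcongr
      _ = θ * dividedPow (m + 1) (Fintype.card V) := by
          rw [dividedPow_succ]
          ring
  linarith

lemma hasCommonLinks_filter_subset (hk : 2 ≤ k) (hH : HyperUniform k H)
    (hx : ∀ v, x * dividedPow (k - 1) (Fintype.card V) ≤ hdeg H v) (hxθ : 1 / 2 + θ < x)
    {U : Finset V} {m : ℕ} (hU : ((#Uᶜ : ℝ) + m) * k ≤ θ * Fintype.card V) :
    HasCommonLinks {e ∈ H | e ⊆ U} U m := by
  intro u hu v hv X hX
  have hV : (0 : ℝ) < Fintype.card V := by exact_mod_cast Fintype.card_pos_iff.2 ⟨u⟩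
  have hE : 0 < dividedPow (k - 1) (Fintype.card V) := by
    unfold dividedPow
    positivity
  have hY : (#(Uᶜ ∪ X) : ℝ) * k ≤ θ * Fintype.card V := by
    refine le_trans ?_ hU
    gcongr
    exact_mod_cast (card_union_le _ _).trans (by gcongr)
  have hcard (w : V) : (1 / 2) * dividedPow (k - 1) (Fintype.card V) <
      #{T ∈ link H w | Disjoint T (Uᶜ ∪ X)} :=
    (mul_lt_mul_of_pos_right (by linarith) hE).trans_le
      (sub_mul_dividedPow_le_card_filter_disjoint hk hH (hx w) hY)
  have hsub (w : V) : {T ∈ link H w | Disjoint T (Uᶜ ∪ X)} ⊆ univ.powersetCard (k - 1) :=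
    fun T hT => mem_powersetCard.2 ⟨subset_univ _, card_of_mem_link hH (mem_filter.1 hT).1⟩
  have hle : (#((univ : Finset V).powersetCard (k - 1)) : ℝ) ≤
      dividedPow (k - 1) (Fintype.card V) :=
    card_le_dividedPow (fun T hT => mem_powersetCard.1 hT) (by rw [card_univ])
  have hlt : #((univ : Finset V).powersetCard (k - 1)) <
      #{T ∈ link H u | Disjoint T (Uᶜ ∪ X)} + #{T ∈ link H v | Disjoint T (Uᶜ ∪ X)} := by
    have hu := hcard u
    have hv := hcard v
    rify
    linarith
  obtain ⟨T, hT⟩ := inter_nonempty_of_card_lt_card_add_card (hsub u) (hsub v) hlt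
  simp only [mem_inter, mem_filter, disjoint_union_right, disjoint_compl_right_iff] at hT
  rw [link_filter_subset hu, link_filter_subset hv]
  exact ⟨T, by simp [hT], hT.1.2.2⟩

end DegreeRobustness

lemma exists_isPerfectMatchingOn_compl {k : ℕ} (hk : 3 ≤ k) {x θ : ℝ} (hθ : θ ≤ 1)
    (hx : fThr k + θ < x) :
    ∃ n₀ : ℕ, ∀ {V : Type*} [Fintype V] [DecidableEq V] {H : Finset (Finset V)},
      n₀ ≤ Fintype.card V → k ∣ Fintype.card V → HyperUniform k H →
      (∀ v, x * dividedPow (k - 1) (Fintype.card V) ≤ hdeg H v) →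
      ∀ W : Finset V, k ∣ #W → #W * k ≤ θ * Fintype.card V →
        ∃ M, IsPerfectMatchingOn H M Wᶜ := by
  obtain ⟨n₀, hn₀⟩ := exists_isPerfectMatchingOn k (lt_sub_iff_add_lt.2 hx)
  refine ⟨2 * n₀, fun {V} _ _ H hV hdvd hH hdeg_ge W hkW hW => ?_⟩
  have hWV := card_compl_add_card W
  have htwo : 2 * #W ≤ Fintype.card V := by
    have hk' : (3 : ℝ) ≤ k := by exact_mod_cast hk
    have : (2 * #W : ℝ) ≤ Fintype.card V := by nlinarith
    exact_mod_cast this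
  refine hn₀ H Wᶜ (by omega) ((Nat.dvd_add_left hkW).1 (by rwa [hWV])) hH fun v _ => ?_
  have hcount := sub_mul_dividedPow_le_card_filter_disjoint (by omega) hH (hdeg_ge v) hW
  simp only [← subset_compl_iff_disjoint_right] at hcount
  refine le_trans ?_ hcount
  have hf := half_le_fThr hk
  refine mul_le_mul_of_nonneg_left ?_ (by linarith)
  exact (choose_pred_le_dividedPow _ _).trans <|
    dividedPow_le_dividedPow _ (by positivity) (by exact_mod_cast card_le_univ _)

section ColorBias

variable {V ι : Type*} [DecidableEq V] [Fintype V] {k : ℕ} {H : Finset (Finset V)}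

lemma exists_div_add_le_card_filter {α : Type*} [Fintype ι] [DecidableEq ι] {M N : Finset α}
    (c : α → ι) (hMN : #M = #N) {i : ι} {s : ℕ}
    (hs : #{e ∈ N | c e = i} + s ≤ #{e ∈ M | c e = i}) {x : ℝ} (hx : Fintype.card ι * x ≤ s) :
    ∃ j, #M / Fintype.card ι + x ≤ (#{e ∈ M | c e = j} : ℝ) ∨
      #M / Fintype.card ι + x ≤ (#{e ∈ N | c e = j} : ℝ) := by
  by_contra! hlt
  have hι : (0 : ℝ) < Fintype.card ι := by exact_mod_cast Fintype.card_pos_iff.2 ⟨i⟩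
  have hN (j : ι) : (#{e ∈ N | c e = j} : ℝ) + (if j = i then (s : ℝ) else 0) <
      #M / Fintype.card ι + x := by
    split_ifs with hj
    · subst hj
      exact lt_of_le_of_lt (by exact_mod_cast hs) (hlt j).1
    · simpa using (hlt j).2
  have hsum := sum_lt_sum_of_nonempty ⟨i, mem_univ i⟩ fun j _ => hN j
  have hfiber : (#N : ℝ) = ∑ j, (#{e ∈ N | c e = j} : ℝ) := by
    exact_mod_cast card_eq_sum_card_fiberwise fun e _ => mem_univ (c e)
  rw [sum_add_distrib, ← hfiber, sum_ite_eq' univ i, if_pos (mem_univ i), sum_const, card_univ,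
    nsmul_eq_mul, mul_add, mul_div_cancel₀ _ hι.ne', hMN] at hsum
  linarith

lemma HasGadget.exists_isPM [Fintype ι] [DecidableEq ι] {c : Finset V → ι} {i : ι} {s : ℕ}
    (h : HasGadget H c k i s) (hk : 1 ≤ k) (hH : HyperUniform k H)
    (hext : ∀ W : Finset V, k ∣ #W → #W ≤ (k + 1) * s * k → ∃ P, IsPerfectMatchingOn H P Wᶜ)
    {x : ℝ} (hx : Fintype.card ι * x ≤ s) :
    ∃ M, IsPM H M ∧ ∃ j,
      Fintype.card V / (Fintype.card ι * k) + x ≤ (#{e ∈ M | c e = j} : ℝ) := by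
  obtain ⟨M, N, W, hM, hN, hcard, hs⟩ := h
  have hW := hM.card_eq hH
  obtain ⟨P, hP⟩ := hext W ⟨#M, by rw [hW, mul_comm]⟩ (by rw [hW]; gcongr)
  have hMP := hM.union hP disjoint_compl_right
  have hNP := hN.union hP disjoint_compl_right
  have hMdisj := hM.disjoint hk hH hP disjoint_compl_right
  have hNdisj := hN.disjoint hk hH hP disjoint_compl_right
  rw [union_compl] at hMP hNP
  have hMcard := hMP.card_eq hH
  have hNcard := hNP.card_eq hH
  have hsize : (Fintype.card V : ℝ) / (Fintype.card ι * k) = #(M ∪ P) / Fintype.card ι := by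
    rw [← card_univ, hMcard]
    push_cast
    field_simp
  obtain ⟨j, hj | hj⟩ := exists_div_add_le_card_filter c (M := M ∪ P) (N := N ∪ P) (i := i)
    (Nat.eq_of_mul_eq_mul_right hk (hMcard.symm.trans hNcard)) (s := s) (by
      rw [filter_union, filter_union, card_union_of_disjoint (disjoint_filter_filter hMdisj),
        card_union_of_disjoint (disjoint_filter_filter hNdisj)]
      omega) hx
  · exact ⟨_, isPM_iff_isPerfectMatchingOn_univ.2 hMP, j, hsize ▸ hj⟩
  · exact ⟨_, isPM_iff_isPerfectMatchingOn_univ.2 hNP, j, hsize ▸ hj⟩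

end ColorBias

section UpperBound

open Filter Topology

variable {r k : ℕ}

lemma eventually_exists_lt_card_filter_of_matchingInvariant (hk : 3 ≤ k) (hr : 2 ≤ r) {ε : ℝ}
    (hε : 0 < ε) :
    ∀ᶠ η : ℝ in 𝓝[>] 0, ∀ {V : Type*} [Fintype V] [Nonempty V] [DecidableEq V]
      {H M : Finset (Finset V)} {U : Finset V} {c : Finset V → Fin r}, HyperUniform k H →
      (∀ v, (max (fThr k) (gThr k r) + ε) * dividedPow (k - 1) (Fintype.card V) ≤ hdeg H v) →
      MatchingInvariant {e ∈ H | e ⊆ U} (k + 1) (colorVector c) →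
      #Uᶜ * k ≤ η * Fintype.card V → (k * (k + 1) * k : ℕ) ≤ η * Fintype.card V →
      IsPerfectMatchingOn H M univ →
        ∃ i, Fintype.card V / (r * k) + η * Fintype.card V < (#{e ∈ M | c e = i} : ℝ) := by
  have hscale : Tendsto (fun η : ℝ => (r + 3) * η) (𝓝[>] 0) (𝓝[>] 0) := by
    simpa using TendstoNhdsWithinIoi.const_mul (b := (r + 3 : ℝ)) (c := 0) (by positivity)
      tendsto_id
  filter_upwards [hscale.eventually (eventually_exists_card_link_le (k := k) (by omega) hr
    (half_pos hε)), Ioo_mem_nhdsGT (show 0 < min (ε / 2) 1 by positivity)]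
    with η hrigid hη V _ _ _ H M U c hH hdeg_ge hinv hU hV hM
  have hηε : η < ε / 2 := hη.2.trans_le (min_le_left _ _)
  have hη1 : η < 1 := hη.2.trans_le (min_le_right _ _)
  have hn : (0 : ℝ) < Fintype.card V := by exact_mod_cast Fintype.card_pos
  have hK : HyperUniform k {e ∈ H | e ⊆ U} := fun e he => hH e (mem_filter.1 he).1
  have hKU : ∀ e ∈ {e ∈ H | e ⊆ U}, e ⊆ U := fun e he => (mem_filter.1 he).2
  have hUn : (#U : ℝ) ≤ Fintype.card V := by exact_mod_cast card_le_univ U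
  have : Nonempty (Fin r) := ⟨⟨0, by omega⟩⟩
  obtain ⟨σ, p, a, h⟩ := exists_isIndexColoring (by omega) hK hKU
    (hasCommonLinks_filter_subset (θ := 2 * η) (by omega) hH hdeg_ge
      (by linarith [(half_le_fThr hk).trans (le_max_left _ (gThr k r))])
      (by push_cast at hV ⊢; linarith)) hinv
  by_contra! hcolor
  have hMU := hM.filter (· ⊆ U)
  have hcover := one_sub_mul_card_le_card_filter_subset_mul hH hM hU
  have hne : ({e ∈ H | e ⊆ U}).Nonempty := by
    refine Nonempty.mono hMU.subset (nonempty_iff_ne_empty.2 fun hempty => ?_)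
    rw [hempty, card_empty, Nat.cast_zero, zero_mul] at hcover
    nlinarith
  obtain ⟨v, hv, hle⟩ := hrigid h hK hne hKU hn hUn <|
    h.hasBalancedSizes (by omega) hK hMU (hMU.vertices_subset hKU) hη1 hn hUn hcover fun i =>
      le_trans (by gcongr; exact filter_subset _ _) (hcolor i)
  have hge := sub_mul_dividedPow_le_card_filter_disjoint (by omega) hH (hdeg_ge v) hU
  simp only [disjoint_compl_right_iff] at hge
  rw [← link_filter_subset hv] at hge
  have hE : 0 < dividedPow (k - 1) (Fintype.card V : ℝ) := by
    unfold dividedPow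
    positivity
  nlinarith

end UpperBound

section Threshold

open Filter Topology

variable {r k : ℕ}

lemma exists_color_excess_of_mul_le (hk : 3 ≤ k) (hr : 2 ≤ r) {x : ℝ}
    (hx : max (fThr k) (gThr k r) < x) :
    ∃ η : ℝ, 0 < η ∧ ∃ n₀ : ℕ, ∀ {V : Type*} [Fintype V] [Nonempty V] [DecidableEq V]
      {H : Finset (Finset V)}, n₀ ≤ Fintype.card V → k ∣ Fintype.card V → HyperUniform k H →
      (∀ v, x * dividedPow (k - 1) (Fintype.card V) ≤ hdeg H v) →
      ∀ (c : Finset V → Fin r) {s : ℕ}, 0 < s →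
        (r * ((k + 1) * s * k) * k : ℕ) ≤ η * Fintype.card V →
        ∃ M, IsPM H M ∧ ∃ i, Fintype.card V / (r * k) + s / r ≤ (#{e ∈ M | c e = i} : ℝ) := by
  have hf := (le_max_left _ _).trans_lt hx
  obtain ⟨η, hinvariant, hη0, hη⟩ := ((eventually_exists_lt_card_filter_of_matchingInvariant hk hr
    (sub_pos.2 hx)).and (Ioo_mem_nhdsGT (lt_min one_pos (sub_pos.2 hf)))).exists
  rw [add_sub_cancel] at hinvariant
  obtain ⟨n₀, hn₀⟩ := exists_isPerfectMatchingOn_compl hk (hη.le.trans (min_le_left _ _))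
    (lt_sub_iff_add_lt'.1 (hη.trans_le (min_le_right _ _)))
  refine ⟨η, hη0, n₀, fun {V} _ _ _ H hV hdvd hH hdeg_ge c s hs hsn => ?_⟩
  have hsmall {m : ℕ} (hm : m ≤ r * ((k + 1) * s * k) * k) : m ≤ η * Fintype.card V :=
    le_trans (by exact_mod_cast hm) hsn
  have hr1 : 1 ≤ r := by omega
  have hext (W : Finset V) (hkW : k ∣ #W) (hW : #W ≤ (k + 1) * s * k) :
      ∃ P, IsPerfectMatchingOn H P Wᶜ :=
    hn₀ hV hdvd hH hdeg_ge W hkW <| by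
      exact_mod_cast hsmall (Nat.mul_le_mul_right k (hW.trans (Nat.le_mul_of_pos_left _ hr1)))
  rcases exists_hasGadget_or_matchingInvariant (c := c) (by omega) hH s with
    ⟨i, hgadget⟩ | ⟨U, hU, hinv⟩
  · have hr0 : (r : ℝ) ≠ 0 := by exact_mod_cast (by omega : r ≠ 0)
    simpa using hgadget.exists_isPM (by omega) hH hext (x := s / r)
      (by simp [mul_div_cancel₀ _ hr0])
  obtain ⟨M, hM⟩ := hext ∅ (by simp) (by simp)
  rw [compl_empty] at hM
  rw [Fintype.card_fin] at hU
  obtain ⟨i, hi⟩ := hinvariant hH hdeg_ge hinv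
    (by exact_mod_cast hsmall (Nat.mul_le_mul_right k hU))
    (hsmall <| by
      calc k * (k + 1) * k = 1 * ((k + 1) * 1 * k) * k := by ring
        _ ≤ r * ((k + 1) * s * k) * k := by gcongr; omega) hM
  have hexcess : (s : ℝ) / r ≤ η * Fintype.card V :=
    (div_le_self (by positivity) (by exact_mod_cast hr1)).trans <| hsmall <| by
      calc s = 1 * ((0 + 1) * s * 1) * 1 := by ring
        _ ≤ r * ((k + 1) * s * k) * k := by gcongr <;> omega
  exact ⟨M, isPM_iff_isPerfectMatchingOn_univ.2 hM, i, by linarith⟩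

lemma exists_nat_mul_le_and_le_two_mul {a t : ℝ} (ha : 0 < a) (hat : a ≤ t) :
    ∃ s : ℕ, 0 < s ∧ a * s ≤ t ∧ t ≤ 2 * (a * s) := by
  have hs : 1 ≤ ⌊t / a⌋₊ := Nat.le_floor (by rwa [Nat.cast_one, one_le_div ha])
  have hs' : (1 : ℝ) ≤ ⌊t / a⌋₊ := by exact_mod_cast hs
  refine ⟨⌊t / a⌋₊, hs, ?_, ?_⟩
  · exact (le_div_iff₀' ha).1 (Nat.floor_le (div_nonneg (ha.le.trans hat) ha.le))
  · have := (div_lt_iff₀' ha).1 (Nat.lt_floor_add_one (t / a))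
    nlinarith

lemma exists_color_excess_of_lt (hk : 3 ≤ k) (hr : 2 ≤ r) {x : ℝ}
    (hx : max (fThr k) (gThr k r) < x) :
    ∃ δ : ℝ, 0 < δ ∧ ∃ n₀ : ℕ, ∀ {V : Type*} [Fintype V] [DecidableEq V]
      {H : Finset (Finset V)}, n₀ ≤ Fintype.card V → k ∣ Fintype.card V → HyperUniform k H →
      (∀ v, x * dividedPow (k - 1) (Fintype.card V) ≤ hdeg H v) →
      ∀ c : Finset V → Fin r, ∃ M, IsPM H M ∧ ∃ i,
        Fintype.card V / (r * k) + δ * Fintype.card V ≤ (#{e ∈ M | c e = i} : ℝ) := by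
  obtain ⟨η, hη, n₀, hn₀⟩ := exists_color_excess_of_mul_le hk hr hx
  have : (0 : ℝ) < r := by exact_mod_cast (by omega : 0 < r)
  have : (0 : ℝ) < k := by exact_mod_cast (by omega : 0 < k)
  set L : ℝ := r * (k + 1) * k * k
  have hL0 : 0 < L := by positivity
  refine ⟨η / (2 * L * r), by positivity, max n₀ ⌈L / η⌉₊,
    fun {V} _ _ H hV hdvd hH hdeg_ge c => ?_⟩
  have hLn : L ≤ η * Fintype.card V :=
    (div_le_iff₀' hη).1 (Nat.ceil_le.1 ((le_max_right _ _).trans hV))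
  have : Nonempty V := Fintype.card_pos_iff.1 <| by
    exact_mod_cast pos_of_mul_pos_right (hL0.trans_le hLn) hη.le
  obtain ⟨s, hs, hle, hge⟩ := exists_nat_mul_le_and_le_two_mul hL0 hLn
  obtain ⟨M, hM, i, hi⟩ := hn₀ ((le_max_left _ _).trans hV) hdvd hH hdeg_ge c hs <| by
    refine le_trans (le_of_eq ?_) hle
    push_cast
    ring
  refine ⟨M, hM, i, le_trans ?_ hi⟩
  gcongr
  calc η / (2 * L * r) * Fintype.card V = η * Fintype.card V / (2 * L * r) := by ring
    _ ≤ 2 * (L * s) / (2 * L * r) := by gcongr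
    _ = s / r := by field_simp

lemma discProp_max (hk : 3 ≤ k) (hr : 2 ≤ r) : DiscProp k r (max (fThr k) (gThr k r)) := by
  intro ε hε
  have hthr : 0 < max (fThr k) (gThr k r) :=
    (half_pos one_pos).trans_le ((half_le_fThr hk).trans (le_max_left _ _))
  set h := max (fThr k) (gThr k r)
  obtain ⟨δ, hδ, n₀, hn₀⟩ := exists_color_excess_of_lt hk hr (lt_add_of_pos_right h (half_pos hε))
  obtain ⟨n₁, hn₁⟩ := eventually_atTop.1 <| eventually_pow_le_mul_choose_pred (k - 1)
    (c := (h + ε) / (h + ε / 2)) ((one_lt_div (by positivity)).2 (by linarith))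
  refine ⟨δ, hδ, max n₀ n₁, fun n hn hkn H hH hdeg_ge c => ?_⟩
  have hpow : (h + ε / 2) * dividedPow (k - 1) n ≤ (h + ε) * ((n - 1).choose (k - 1) : ℝ) := by
    have := hn₁ n ((le_max_right _ _).trans hn)
    rw [dividedPow, mul_div_assoc', div_le_iff₀ (by positivity), ← le_div_iff₀' (by positivity)]
    exact this.trans_eq (by ring)
  simpa using hn₀ (by simpa using (le_max_left _ _).trans hn) (by simpa using hkn) hH
    (fun v => by simpa using hpow.trans (hdeg_ge v)) c

end Threshold

theorem discrepancy_threshold_eq (k r : ℕ) (hk : 3 ≤ k) (hr : 2 ≤ r) :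
    hThr k r = max (fThr k) (gThr k r) := by
  have hmem : max (fThr k) (gThr k r) ∈ {h : ℝ | 0 < h ∧ DiscProp k r h} :=
    ⟨(half_pos one_pos).trans_le ((half_le_fThr hk).trans (le_max_left _ _)), discProp_max hk hr⟩
  refine le_antisymm (csInf_le ⟨0, fun h hh => hh.1.le⟩ hmem) (le_csInf ⟨_, hmem⟩ ?_)
  rintro h ⟨hh, hD⟩
  have hf : fThr k ≤ h := fThr_le_of_discProp (by omega) (by omega) hh.le hD
  have hg : gThr k r ≤ h := gThr_le (by omega) (by omega) fun a ha j hmin =>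
    vertexDensity_le_of_discProp (by omega) hD ha hmin
  exact max_le hf hg
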